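/- Let M be a stable reduced G_C-perfect R-module of G_C-dimension n, and assume λM ∈ A_C. Then the following are equivalent: (i) M is horizontally linked; (ii) r.grade_R(M,C) + r.grade_R(λM, R) = grade_R(Ext_R^n(M,C)); (iii) grade_R(Ext_R^n(M,C)) ≥ n + 1; (iv) grade_R(Ext_R^i(M,C)) ≥ i + 1 for all i > 0. -/

import Mathlib

open CategoryTheory TensorProduct

noncomputable section

universe u

variable (R : Type u) [CommRing R]

/-- The `i`-th Ext module `Ext_R^i(M, N)`. -/
def ExtM (M N : ModuleCat.{u} R) (i : ℕ) : ModuleCat.{u} R :=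
  ((Ext R (ModuleCat.{u} R) i).obj (Opposite.op M)).obj N

/-- The `i`-th Tor module `Tor_i^R(M, N)`. -/
def TorM (M N : ModuleCat.{u} R) (i : ℕ) : ModuleCat.{u} R :=
  ((Tor (ModuleCat.{u} R) i).obj M).obj N

/-- The biduality (evaluation) map `M → Hom_R(Hom_R(M, C), C)`. -/
def bidualityMap (C M : ModuleCat.{u} R) :
    ↥M →ₗ[R] ((↥M →ₗ[R] ↥C) →ₗ[R] ↥C) :=
  (LinearMap.id : (↥M →ₗ[R] ↥C) →ₗ[R] (↥M →ₗ[R] ↥C)).flip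

/-- `C` is a semidualizing `R`-module. -/
def IsSemidualizing (C : ModuleCat.{u} R) : Prop :=
  Module.Finite R ↥C ∧
  Function.Bijective (fun r : R => (r • LinearMap.id : ↥C →ₗ[R] ↥C)) ∧
  ∀ i : ℕ, 0 < i → Subsingleton (ExtM R C C i)

/-- `M` is totally `C`-reflexive. -/
def IsTotallyCReflexive (C M : ModuleCat.{u} R) : Prop :=
  Module.Finite R ↥M ∧
  Function.Bijective (bidualityMap R C M) ∧
  (∀ i : ℕ, 0 < i → Subsingleton (ExtM R M C i)) ∧
  (∀ i : ℕ, 0 < i → Subsingleton (ExtM R (ModuleCat.of R (↥M →ₗ[R] ↥C)) C i))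

/-- `G_C`-dimension of `M` is at most `n`: there is an exact sequence
`0 → X_n → ⋯ → X_0 → M → 0` with each `X_i` totally `C`-reflexive. -/
def gcdimLE (C : ModuleCat.{u} R) : ℕ → ModuleCat.{u} R → Prop
  | 0, M => IsTotallyCReflexive R C M
  | n+1, M => ∃ (X K : ModuleCat.{u} R) (f : ↥K →ₗ[R] ↥X) (g : ↥X →ₗ[R] ↥M),
      Function.Injective f ∧ Function.Surjective g ∧
      LinearMap.ker g = LinearMap.range f ∧
      IsTotallyCReflexive R C X ∧ gcdimLE C n K

/-- The `G_C`-dimension of `M`, as an element of `ℕ∞`. -/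
def gcdim (C M : ModuleCat.{u} R) : ℕ∞ :=
  sInf ((fun n : ℕ => (n : ℕ∞)) '' {n | gcdimLE R C n M})

/-- `grade_R(M) = inf { i | Ext_R^i(M, R) ≠ 0 }`, with `grade 0 = ∞`. -/
def gradeR (M : ModuleCat.{u} R) : ℕ∞ :=
  sInf ((fun i : ℕ => (i : ℕ∞)) ''
    {i | ¬ Subsingleton (ExtM R M (ModuleCat.of R R) i)})

/-- Reduced grade of `M` with respect to `C`. -/
def rgrade (C M : ModuleCat.{u} R) : ℕ∞ :=
  sInf ((fun i : ℕ => (i : ℕ∞)) ''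
    {i | 0 < i ∧ ¬ Subsingleton (ExtM R M C i)})

/-- `M` is reduced `G_C`-perfect. -/
def IsReducedGCPerfect (C M : ModuleCat.{u} R) : Prop :=
  gcdim R C M ≠ ⊤ ∧ rgrade R C M = gcdim R C M

/-- `M` is `G_C`-perfect. -/
def IsGCPerfect (C M : ModuleCat.{u} R) : Prop :=
  gcdim R C M ≠ ⊤ ∧ gradeR R M = gcdim R C M

/-- `π : P → M` is a projective cover: `P` projective, `π` surjective with superfluous kernel. -/
def IsProjectiveCover {P M : ModuleCat.{u} R} (π : ↥P →ₗ[R] ↥M) : Prop :=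
  Module.Projective R ↥P ∧ Function.Surjective π ∧
  ∀ N : Submodule R ↥P, N ⊔ LinearMap.ker π = ⊤ → N = ⊤

/-- `P₁ →d P₀ →π M → 0` is a minimal projective presentation of `M`. -/
def IsMinimalPresentation {P1 P0 M : ModuleCat.{u} R}
    (d : ↥P1 →ₗ[R] ↥P0) (π : ↥P0 →ₗ[R] ↥M) : Prop :=
  Module.Finite R ↥P1 ∧ Module.Finite R ↥P0 ∧
  IsProjectiveCover R π ∧
  LinearMap.range d = LinearMap.ker π ∧
  Module.Projective R ↥P1 ∧
  ∀ N : Submodule R ↥P1, N ⊔ LinearMap.ker d = ⊤ → N = ⊤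

/-- `T` is (a module isomorphic to) the transpose `Tr_C(M)` of `M` with respect to `C`,
computed from a minimal projective presentation of `M`. -/
def IsTransposeC (C M T : ModuleCat.{u} R) : Prop :=
  ∃ (P1 P0 : ModuleCat.{u} R) (d : ↥P1 →ₗ[R] ↥P0) (π : ↥P0 →ₗ[R] ↥M),
    IsMinimalPresentation R d π ∧
    Nonempty (↥T ≃ₗ[R]
      ((↥P1 →ₗ[R] ↥C) ⧸ LinearMap.range (LinearMap.lcomp R ↥C d)))

/-- `T` is the usual Auslander transpose `Tr(M) = Tr_R(M)`. -/
def IsTranspose (M T : ModuleCat.{u} R) : Prop :=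
  IsTransposeC R (ModuleCat.of R R) M T

/-- `S` is (a module isomorphic to) the first syzygy `Ω N`, i.e. the kernel of a
projective cover of `N`. -/
def IsSyzygyOf (N S : ModuleCat.{u} R) : Prop :=
  ∃ (P : ModuleCat.{u} R) (π : ↥P →ₗ[R] ↥N),
    Module.Finite R ↥P ∧ IsProjectiveCover R π ∧
    Nonempty (↥S ≃ₗ[R] LinearMap.ker π)

/-- `S` is (a module isomorphic to) the `n`-th syzygy `Ωⁿ M`. -/
def IsNthSyzygy : ℕ → ModuleCat.{u} R → ModuleCat.{u} R → Prop
  | 0, M, S => Nonempty (↥S ≃ₗ[R] ↥M)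
  | n+1, M, S => ∃ K : ModuleCat.{u} R, IsNthSyzygy n M K ∧ IsSyzygyOf R K S

/-- `L` is (a module isomorphic to) `λ M = Ω Tr M`. -/
def IsLambda (M L : ModuleCat.{u} R) : Prop :=
  ∃ T : ModuleCat.{u} R, IsTranspose R M T ∧ IsSyzygyOf R T L

/-- `M` is horizontally linked, i.e. `M ≅ λλM`. -/
def IsHorizontallyLinked (M : ModuleCat.{u} R) : Prop :=
  ∃ L L2 : ModuleCat.{u} R, IsLambda R M L ∧ IsLambda R L L2 ∧
    Nonempty (↥M ≃ₗ[R] ↥L2)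

/-- `M` is stable: it has no non-zero projective direct summand. -/
def IsStable (M : ModuleCat.{u} R) : Prop :=
  ∀ (P N : ModuleCat.{u} R), Module.Projective R ↥P →
    Nonempty (↥M ≃ₗ[R] (↥P × ↥N)) → Subsingleton ↥P

/-- `N` belongs to the Auslander class `A_C`. -/
def MemAuslanderClass (C N : ModuleCat.{u} R) : Prop :=
  Function.Bijective (TensorProduct.mk R ↥N ↥C) ∧
  (∀ i : ℕ, 0 < i → Subsingleton (TorM R C N i)) ∧
  (∀ i : ℕ, 0 < i → Subsingleton
    (ExtM R C (ModuleCat.of R (↥N ⊗[R] ↥C)) i))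

/-- `R` is semiperfect: every finite `R`-module has a projective cover. -/
def IsSemiperfectRing : Prop :=
  ∀ M : ModuleCat.{u} R, Module.Finite R ↥M →
    ∃ (P : ModuleCat.{u} R) (π : ↥P →ₗ[R] ↥M),
      Module.Finite R ↥P ∧ IsProjectiveCover R π

/-- Depth over a local ring, via Ext from the residue field. -/
def rdepth [IsLocalRing R] (M : ModuleCat.{u} R) : ℕ∞ :=
  sInf ((fun i : ℕ => (i : ℕ∞)) ''
    {i | ¬ Subsingleton
      (ExtM R (ModuleCat.of R (IsLocalRing.ResidueField R)) M i)})

/-- Projective dimension at most `n`. -/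
def pdimLE : ℕ → ModuleCat.{u} R → Prop
  | 0, M => Module.Projective R ↥M
  | n+1, M => ∃ (X K : ModuleCat.{u} R) (f : ↥K →ₗ[R] ↥X) (g : ↥X →ₗ[R] ↥M),
      Function.Injective f ∧ Function.Surjective g ∧
      LinearMap.ker g = LinearMap.range f ∧
      Module.Projective R ↥X ∧ pdimLE n K

/-- Projective dimension, as an element of `ℕ∞`. -/
def pdim (M : ModuleCat.{u} R) : ℕ∞ :=
  sInf ((fun n : ℕ => (n : ℕ∞)) '' {n | pdimLE R n M})

/-- `M` is `C`-`k`-torsionless. -/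
def IsCkTorsionless (C M : ModuleCat.{u} R) (k : ℕ) : Prop :=
  k = 0 ∨ ∀ T : ModuleCat.{u} R, IsTransposeC R C M T →
    ∀ i : ℕ, 1 ≤ i → i ≤ k → Subsingleton (ExtM R T C i)

/-- `M` is a `C`-syzygy: it embeds into `P ⊗_R C` with `P` finite projective. -/
def IsCSyzygy (C M : ModuleCat.{u} R) : Prop :=
  ∃ (P : ModuleCat.{u} R), Module.Finite R ↥P ∧ Module.Projective R ↥P ∧
    ∃ f : ↥M →ₗ[R] (↥P ⊗[R] ↥C), Function.Injective f


/-- There is an exact sequence `0 → N → X_k → ⋯ → X_1 → M → 0` of finite `R`-modules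
with `Ext_R^i(X_j, C) = 0` for all `i > 0` and all `j`. -/
def ExtVanishingChain (C : ModuleCat.{u} R) : ℕ → ModuleCat.{u} R → ModuleCat.{u} R → Prop
  | 0, N, M => Nonempty (↥N ≃ₗ[R] ↥M)
  | k+1, N, M => ∃ (X K : ModuleCat.{u} R) (f : ↥K →ₗ[R] ↥X) (g : ↥X →ₗ[R] ↥M),
      Function.Injective f ∧ Function.Surjective g ∧
      LinearMap.ker g = LinearMap.range f ∧
      Module.Finite R ↥X ∧ (∀ i : ℕ, 0 < i → Subsingleton (ExtM R X C i)) ∧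
      ExtVanishingChain C k N K

/-!
Let `M` be finite with `Ext^i(M, C) = 0` for `0 < i < n` and `G_C`-dimension `n`, and put
`E = Ext^n(M, C)`. Dualizing a resolution of `M` by totally `C`-reflexive modules shows that
`Ext^i(E, C) = 0` for `i < n`, that `Ext^n(E, C)` and `Ext^(n+1)(E, C)` vanish exactly when the
biduality map `M → M^{CC}` is injective, respectively surjective, and that `Ext^(n+2+j)(E, C)`
vanishes exactly when `Ext^(j+1)(M^C, C)` does. As `Hom(E, C) = 0`, the grade of `E` can be computed
with `C` in place of `R`.

If `P₁ → P₀ → M` is a minimal presentation, `λM` is the image of `P₀^* → P₁^*`. When `Tor_i(C, λM)`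
vanishes for `i > 0` and `λM → Hom(C, λM ⊗ C)` is onto, `λM ⊗ C` is the image of `P₀^C → P₁^C`.
Hence the biduality map is injective iff `M` is torsionless, which for stable `M` means horizontally
linked, and `Ext^i(λM, R)` vanishes iff `Ext^(n+i)(E, C)` does, for `i > 0`. So `M` is linked iff
`grade E > n`, and in that case `grade E = n + r.grade λM`.
-/

section ExtComparison

variable {R}

theorem nonempty_homology_linearEquiv (S : ShortComplex (ModuleCat.{u} R)) {Y : Type u}
    [AddCommGroup Y] [Module R Y] (Φ : LinearMap.ker S.g.hom →ₗ[R] Y)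
    (surjective : Function.Surjective Φ)
    (ker_eq : LinearMap.ker Φ = LinearMap.range S.moduleCatToCycles) :
    Nonempty (S.homology ≃ₗ[R] Y) :=
  ⟨S.moduleCatHomologyIso.toLinearEquiv ≪≫ₗ Submodule.quotEquivOfEq _ _ ker_eq.symm ≪≫ₗ
    Φ.quotKerEquivOfSurjective surjective⟩

variable {M N : ModuleCat.{u} R} (P : ProjectiveResolution M)

theorem extMk_zero_eq_zero_iff (f : P.complex.X 0 ⟶ N) (hf : P.complex.d 1 0 ≫ f = 0) :
    P.extMk f 1 rfl hf = 0 ↔ f = 0 := by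
  refine ⟨fun h ↦ ?_, by rintro rfl; exact P.extMk_zero 1 rfl⟩
  rw [← P.extEquivCohomologyClass.apply_eq_iff_eq,
    ProjectiveResolution.extEquivCohomologyClass_extMk,
    ProjectiveResolution.extEquivCohomologyClass_zero,
    CochainComplex.HomComplex.CohomologyClass.mk_eq_zero_iff,
    CochainComplex.HomComplex.Cocycle.toSingleMk_mem_coboundaries_iff _ _ _ _ _ 1 (by simp)] at h
  obtain ⟨g, hg⟩ := h
  have isZero : Limits.IsZero (P.cochainComplex.X 1) :=
    CochainComplex.isZero_of_isStrictlyLE _ 0 1 (by simp)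
  rw [isZero.eq_of_src g 0, Limits.comp_zero] at hg
  rw [← cancel_epi (P.cochainComplexXIso (-(0 : ℕ)) 0 rfl).hom, ← hg]
  simp only [Limits.comp_zero]

theorem extMk_smul {n : ℕ} (r : R) (f : P.complex.X n ⟶ N)
    (hf : P.complex.d (n + 1) n ≫ f = 0) :
    P.extMk (r • f) (n + 1) rfl (by simp [hf]) = r • P.extMk f (n + 1) rfl hf := by
  rw [Abelian.Ext.smul_eq_comp_mk₀, ProjectiveResolution.extMk_comp_mk₀]
  congr 1

/-- The map from degree `n` cocycles of `Hom(P, N)` to `Ext^n(M, N)` attached to a projective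
resolution `P` of `M`. It compares the derived functor `ExtM` with Yoneda's `Abelian.Ext`. -/
def cocyclesToExt (N : ModuleCat.{u} R) (n : ℕ) :
    LinearMap.ker ((P.complex.linearYonedaObj R N).d n (n + 1)).hom →ₗ[R] Abelian.Ext M N n where
  toFun f := P.extMk (n := n) f.1 (n + 1) rfl f.2
  map_add' _ _ := (P.add_extMk _ _ _ _ _ _).symm
  map_smul' r f := extMk_smul P r f.1 f.2

theorem cocyclesToExt_surjective (n : ℕ) : Function.Surjective (cocyclesToExt P N n) := fun α ↦ by
  obtain ⟨f, hf, rfl⟩ := P.extMk_surjective α (n + 1) rfl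
  exact ⟨⟨f, hf⟩, rfl⟩

theorem ker_cocyclesToExt_zero : LinearMap.ker (cocyclesToExt P N 0) =
    LinearMap.range ((P.complex.linearYonedaObj R N).sc' 0 0 1).moduleCatToCycles := by
  have range_eq_bot :
      LinearMap.range ((P.complex.linearYonedaObj R N).sc' 0 0 1).moduleCatToCycles = ⊥ := by
    rw [LinearMap.range_eq_bot]
    ext x
    change ((P.complex.linearYonedaObj R N).d 0 0).hom x = 0
    rw [HomologicalComplex.shape _ _ _ (by simp)]
    rfl
  have ker_eq_bot : LinearMap.ker (cocyclesToExt P N 0) = ⊥ :=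
    LinearMap.ker_eq_bot'.mpr fun f hf ↦ Subtype.ext ((extMk_zero_eq_zero_iff P f.1 f.2).mp hf)
  exact ker_eq_bot.trans range_eq_bot.symm

theorem ker_cocyclesToExt_succ (n : ℕ) : LinearMap.ker (cocyclesToExt P N (n + 1)) =
    LinearMap.range
      ((P.complex.linearYonedaObj R N).sc' n (n + 1) (n + 2)).moduleCatToCycles := by
  ext ⟨f, hf⟩
  refine (P.extMk_eq_zero_iff f (n + 2) rfl hf n rfl).trans ⟨?_, ?_⟩
  · rintro ⟨g, hg⟩
    exact ⟨g, Subtype.ext hg⟩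
  · rintro ⟨g, hg⟩
    exact ⟨g, congrArg Subtype.val hg⟩

theorem nonempty_extM_linearEquiv_ext (M N : ModuleCat.{u} R) (n : ℕ) :
    Nonempty (ExtM R M N n ≃ₗ[R] Abelian.Ext M N n) := by
  let P := projectiveResolution M
  let K := P.complex.linearYonedaObj R N
  have derived : ExtM R M N n ≃ₗ[R] K.homology n := (P.isoExt (R := R) n N).toLinearEquiv
  cases n with
  | zero =>
    obtain ⟨e⟩ := nonempty_homology_linearEquiv (K.sc' 0 0 1) _
      (cocyclesToExt_surjective P 0) (ker_cocyclesToExt_zero P)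
    exact ⟨derived ≪≫ₗ (K.homologyIsoSc' 0 0 1 (by simp) (by simp)).toLinearEquiv ≪≫ₗ e⟩
  | succ n =>
    obtain ⟨e⟩ := nonempty_homology_linearEquiv (K.sc' n (n + 1) (n + 2)) _
      (cocyclesToExt_surjective P (n + 1)) (ker_cocyclesToExt_succ P n)
    exact ⟨derived ≪≫ₗ
      (K.homologyIsoSc' n (n + 1) (n + 2) (by simp) (by simp)).toLinearEquiv ≪≫ₗ e⟩

end ExtComparison

section ExtVanishing

/-- `Ext_R^i(M, N) = 0` for unbundled modules. It is phrased with `CategoryTheory.Abelian.Ext`, for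
which the long exact sequences are available; see `subsingleton_extM_iff` for `ExtM`. -/
def ExtVanishes (M N : Type u) [AddCommGroup M] [AddCommGroup N] [Module R M] [Module R N]
    (i : ℕ) : Prop :=
  Subsingleton (Abelian.Ext (ModuleCat.of R M) (ModuleCat.of R N) i)

variable {R}

theorem subsingleton_extM_iff (M N : ModuleCat.{u} R) (i : ℕ) :
    Subsingleton (ExtM R M N i) ↔ ExtVanishes R M N i :=
  let ⟨e⟩ := nonempty_extM_linearEquiv_ext M N i
  e.toEquiv.subsingleton_congr

variable {A B D M N : Type u} [AddCommGroup A] [AddCommGroup B] [AddCommGroup D] [AddCommGroup M]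
  [AddCommGroup N] [Module R A] [Module R B] [Module R D] [Module R M] [Module R N]

/-- Linear maps as Yoneda extensions of degree zero. -/
def homExtEquiv : (M →ₗ[R] N) ≃ₗ[R] Abelian.Ext (ModuleCat.of R M) (ModuleCat.of R N) 0 :=
  (ModuleCat.homLinearEquiv (S := R) (M := ModuleCat.of R M) (N := ModuleCat.of R N)).symm ≪≫ₗ
    (Abelian.Ext.linearEquiv₀ (R := R)).symm

theorem homExtEquiv_comp_homExtEquiv (f : A →ₗ[R] B) (g : B →ₗ[R] D) :
    (homExtEquiv f).comp (homExtEquiv g) (zero_add 0) = homExtEquiv (g ∘ₗ f) :=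
  Abelian.Ext.mk₀_comp_mk₀ (ModuleCat.ofHom f) (ModuleCat.ofHom g)

theorem extVanishes_zero_iff : ExtVanishes R M N 0 ↔ Subsingleton (M →ₗ[R] N) :=
  homExtEquiv.symm.toEquiv.subsingleton_congr

theorem extVanishes_succ_of_projective [Module.Projective R M] (i : ℕ) :
    ExtVanishes R M N (i + 1) :=
  have : Projective (ModuleCat.of R M) := (IsProjective.iff_projective _).mp inferInstance
  subsingleton_of_forall_eq 0 fun x ↦ x.eq_zero_of_projective

theorem ExtVanishes.of_linearEquiv {i : ℕ} (h : ExtVanishes R A N i) (e : A ≃ₗ[R] B) :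
    ExtVanishes R B N i := by
  have : Subsingleton (Abelian.Ext (ModuleCat.of R A) (ModuleCat.of R N) i) := h
  refine subsingleton_of_forall_eq 0 fun x ↦ ?_
  calc x = (homExtEquiv (e.toLinearMap ∘ₗ e.symm.toLinearMap)).comp x (zero_add i) := by
        rw [e.comp_symm]
        exact (x.mk₀_id_comp).symm
    _ = (homExtEquiv e.symm.toLinearMap).comp
          ((homExtEquiv e.toLinearMap).comp x (zero_add i)) (zero_add i) := by
        rw [← homExtEquiv_comp_homExtEquiv, Abelian.Ext.comp_assoc _ _ _ (zero_add 0) _ (by simp)]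
    _ = 0 := by
        rw [Subsingleton.elim ((homExtEquiv e.toLinearMap).comp x _) 0, Abelian.Ext.comp_zero]

theorem extVanishes_iff_of_linearEquiv {i : ℕ} (e : A ≃ₗ[R] B) :
    ExtVanishes R A N i ↔ ExtVanishes R B N i :=
  ⟨fun h ↦ h.of_linearEquiv e, fun h ↦ h.of_linearEquiv e.symm⟩

/-- The sequence `0 → A → B → D → 0` of linear maps `f` and `g` is exact. -/
structure IsShortExact (f : A →ₗ[R] B) (g : B →ₗ[R] D) : Prop where
  injective : Function.Injective f
  exact : Function.Exact f g
  surjective : Function.Surjective g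

theorem isShortExact_subtype_mkQ (p : Submodule R B) : IsShortExact p.subtype p.mkQ :=
  ⟨p.injective_subtype, LinearMap.exact_subtype_mkQ p, p.mkQ_surjective⟩

theorem isShortExact_subtype_ker {g : B →ₗ[R] D} (hg : Function.Surjective g) :
    IsShortExact (LinearMap.ker g).subtype g :=
  ⟨Submodule.injective_subtype _, LinearMap.exact_subtype_ker_map g, hg⟩

variable (N) in
theorem isShortExact_lcomp_rangeRestrict {f : A →ₗ[R] B} {g : B →ₗ[R] D}
    (hfg : Function.Exact f g) (hg : Function.Surjective g) :
    IsShortExact (LinearMap.lcomp R N g) (LinearMap.lcomp R N f).rangeRestrict where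
  injective := LinearMap.lcomp_injective_of_surjective g hg
  exact φ := Subtype.ext_iff.trans (LinearMap.exact_lcomp_of_exact_of_surjective N hfg hg φ)
  surjective := LinearMap.surjective_rangeRestrict _

variable (R A) in
theorem exists_isShortExact_projective :
    ∃ (K P : ModuleCat.{u} R) (f : K →ₗ[R] P) (g : P →ₗ[R] A),
      Module.Projective R P ∧ IsShortExact f g :=
  ⟨.of R _, .of R (A →₀ R), _, _, inferInstanceAs (Module.Projective R (A →₀ R)),
    isShortExact_subtype_ker (Finsupp.linearCombination_id_surjective R A)⟩

variable (R A) in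
theorem exists_isShortExact_projective_finite [IsNoetherianRing R] [Module.Finite R A] :
    ∃ (K P : ModuleCat.{u} R) (f : K →ₗ[R] P) (g : P →ₗ[R] A),
      Module.Projective R P ∧ Module.Finite R K ∧ IsShortExact f g :=
  let ⟨n, g, hg⟩ := Module.Finite.exists_fin' R A
  ⟨.of R (LinearMap.ker g), .of R (Fin n → R), _, _,
    inferInstanceAs (Module.Projective R (Fin n → R)),
    inferInstanceAs (Module.Finite R (LinearMap.ker g)), isShortExact_subtype_ker hg⟩

namespace IsShortExact

variable {f : A →ₗ[R] B} {g : B →ₗ[R] D} (h : IsShortExact f g)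
include h

theorem shortExact :
    (ModuleCat.shortComplexOfCompEqZero f g h.exact.linearMap_comp_eq_zero).ShortExact :=
  ModuleCat.shortComplex_shortExact _ h.exact h.injective h.surjective

variable (N) in
theorem dual (hf : Function.Surjective (LinearMap.lcomp R N f)) :
    IsShortExact (LinearMap.lcomp R N g) (LinearMap.lcomp R N f) :=
  ⟨LinearMap.lcomp_injective_of_surjective g h.surjective,
    LinearMap.exact_lcomp_of_exact_of_surjective N h.exact h.surjective, hf⟩

theorem rTensor [Module.Flat R N] : IsShortExact (f.rTensor N) (g.rTensor N) :=
  ⟨Module.Flat.rTensor_preserves_injective_linearMap f h.injective,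
    rTensor_exact N h.exact h.surjective, LinearMap.rTensor_surjective N h.surjective⟩

variable (N) in
/-- The connecting homomorphism `Ext_R^i(A, N) → Ext_R^{i+1}(D, N)`. -/
def extConnecting (i : ℕ) : Abelian.Ext (ModuleCat.of R A) (ModuleCat.of R N) i →ₗ[R]
    Abelian.Ext (ModuleCat.of R D) (ModuleCat.of R N) (i + 1) :=
  h.shortExact.extClass.precompOfLinear R (ModuleCat.of R N) (add_comm 1 i)

theorem extConnecting_surjective {i : ℕ} (hB : ExtVanishes R B N (i + 1)) :
    Function.Surjective (h.extConnecting N i) := fun x ↦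
  Abelian.Ext.contravariant_sequence_exact₃ h.shortExact _ x
    (hB.elim _ _) (add_comm 1 i)

theorem extConnecting_injective {i : ℕ} (hB : ExtVanishes R B N i) :
    Function.Injective (h.extConnecting N i) := by
  refine (injective_iff_map_eq_zero _).mpr fun x hx ↦ ?_
  obtain ⟨y, rfl⟩ :=
    Abelian.Ext.contravariant_sequence_exact₁ h.shortExact _ x (add_comm 1 i) hx
  rw [hB.elim y 0, Abelian.Ext.comp_zero]

theorem extConnecting_homExtEquiv_eq_zero_iff (φ : A →ₗ[R] N) :
    h.extConnecting N 0 (homExtEquiv φ) = 0 ↔ φ ∈ LinearMap.range (LinearMap.lcomp R N f) := by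
  constructor
  · intro hφ
    obtain ⟨y, hy⟩ :=
      Abelian.Ext.contravariant_sequence_exact₁ h.shortExact _ _ (add_comm 1 0) hφ
    obtain ⟨ψ, rfl⟩ := homExtEquiv.surjective y
    exact ⟨ψ, homExtEquiv.injective ((homExtEquiv_comp_homExtEquiv f ψ).symm.trans hy)⟩
  · rintro ⟨ψ, rfl⟩
    change h.shortExact.extClass.comp (homExtEquiv (ψ ∘ₗ f)) (add_comm 1 0) = 0
    rw [← homExtEquiv_comp_homExtEquiv,
      ← Abelian.Ext.comp_assoc _ _ _ (add_zero 1) (zero_add 0) (add_comm 1 0)]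
    exact (congrArg (fun x ↦ Abelian.Ext.comp x _ (add_comm 1 0)) h.shortExact.extClass_comp).trans
      (Abelian.Ext.zero_comp ..)

theorem extVanishes_iff {i : ℕ} (hB : ExtVanishes R B N i) (hB' : ExtVanishes R B N (i + 1)) :
    ExtVanishes R A N i ↔ ExtVanishes R D N (i + 1) :=
  (Equiv.ofBijective _
    ⟨h.extConnecting_injective hB, h.extConnecting_surjective hB'⟩).subsingleton_congr

theorem lcomp_surjective (hD : ExtVanishes R D N 1) :
    Function.Surjective (LinearMap.lcomp R N f) := fun φ ↦
  (h.extConnecting_homExtEquiv_eq_zero_iff φ).mp (hD.elim _ _)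

theorem extVanishes_one_iff (hB : ExtVanishes R B N 1) :
    ExtVanishes R D N 1 ↔ Function.Surjective (LinearMap.lcomp R N f) := by
  refine ⟨h.lcomp_surjective, fun H ↦ subsingleton_of_forall_eq 0 fun x ↦ ?_⟩
  obtain ⟨y, rfl⟩ := h.extConnecting_surjective hB x
  obtain ⟨φ, rfl⟩ := homExtEquiv.surjective y
  exact (h.extConnecting_homExtEquiv_eq_zero_iff φ).mpr (H φ)

theorem nonempty_quotient_range_lcomp_linearEquiv_ext_one (hB : ExtVanishes R B N 1) :
    Nonempty (((A →ₗ[R] N) ⧸ LinearMap.range (LinearMap.lcomp R N f)) ≃ₗ[R]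
      Abelian.Ext (ModuleCat.of R D) (ModuleCat.of R N) 1) := by
  let δ := h.extConnecting N 0 ∘ₗ homExtEquiv.toLinearMap
  have hδ : Function.Surjective δ :=
    (h.extConnecting_surjective hB).comp homExtEquiv.surjective
  have ker_eq : LinearMap.range (LinearMap.lcomp R N f) = LinearMap.ker δ :=
    Submodule.ext fun φ ↦ (h.extConnecting_homExtEquiv_eq_zero_iff φ).symm
  exact ⟨Submodule.quotEquivOfEq _ _ ker_eq ≪≫ₗ δ.quotKerEquivOfSurjective hδ⟩

theorem compRight_surjective (hA : ExtVanishes R N A 1) :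
    Function.Surjective (g.compRight R : (N →ₗ[R] B) →ₗ[R] N →ₗ[R] D) := fun φ ↦ by
  obtain ⟨y, hy⟩ := Abelian.Ext.covariant_sequence_exact₃ (ModuleCat.of R N) h.shortExact
    (homExtEquiv φ) (zero_add 1) (hA.elim _ _)
  obtain ⟨ψ, rfl⟩ := homExtEquiv.surjective y
  exact ⟨ψ, homExtEquiv.injective ((homExtEquiv_comp_homExtEquiv ψ g).symm.trans hy)⟩

theorem extVanishes_right {i : ℕ} (hB : ExtVanishes R N B i) (hA : ExtVanishes R N A (i + 1)) :
    ExtVanishes R N D i := by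
  refine subsingleton_of_forall_eq 0 fun x ↦ ?_
  obtain ⟨y, rfl⟩ := Abelian.Ext.covariant_sequence_exact₃ (ModuleCat.of R N) h.shortExact x rfl
    (hA.elim _ _)
  rw [hB.elim y 0, Abelian.Ext.zero_comp]

variable [Module.Projective R B]

theorem extVanishes_one_iff_of_projective :
    ExtVanishes R D N 1 ↔ Function.Surjective (LinearMap.lcomp R N f) :=
  h.extVanishes_one_iff (extVanishes_succ_of_projective 0)

theorem extVanishes_succ_iff_of_projective (i : ℕ) :
    ExtVanishes R A N (i + 1) ↔ ExtVanishes R D N (i + 2) :=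
  h.extVanishes_iff (extVanishes_succ_of_projective i) (extVanishes_succ_of_projective (i + 1))

end IsShortExact

end ExtVanishing

section HomTensor

variable {R}
variable {A B N N' P : Type u} [AddCommGroup A] [AddCommGroup B] [AddCommGroup N] [AddCommGroup N']
  [AddCommGroup P] [Module R A] [Module R B] [Module R N] [Module R N'] [Module R P]

theorem lcomp_surjective_congr (f : A →ₗ[R] B) (e : N ≃ₗ[R] N') :
    Function.Surjective (LinearMap.lcomp R N f) ↔ Function.Surjective (LinearMap.lcomp R N' f) :=
  (EquivLike.comp_surjective _ (e.congrRight (M := A))).symm.trans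
    (EquivLike.surjective_comp (e.congrRight (M := B)) (LinearMap.lcomp R N' f))

theorem lcomp_rTensor_surjective_iff (f : A →ₗ[R] B) :
    Function.Surjective (LinearMap.lcomp R N (f.rTensor P)) ↔
      Function.Surjective (LinearMap.lcomp R (P →ₗ[R] N) f) :=
  (EquivLike.comp_surjective _ (TensorProduct.lift.equiv (.id R) A P N).symm).symm.trans
    (EquivLike.surjective_comp (TensorProduct.lift.equiv (.id R) B P N).symm
      (LinearMap.lcomp R (P →ₗ[R] N) f))

theorem lcomp_lTensor_surjective_iff (f : A →ₗ[R] B) :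
    Function.Surjective (LinearMap.lcomp R N (f.lTensor P)) ↔
      Function.Surjective (LinearMap.lcomp R (P →ₗ[R] N) f) :=
  (EquivLike.comp_surjective _
    ((TensorProduct.lift.equiv (.id R) P A N).symm ≪≫ₗ LinearMap.lflip)).symm.trans
    (EquivLike.surjective_comp
      ((TensorProduct.lift.equiv (.id R) P B N).symm ≪≫ₗ LinearMap.lflip)
      (LinearMap.lcomp R (P →ₗ[R] N) f))

theorem lcomp_hom_surjective [Module.Projective R P] {f : A →ₗ[R] B}
    (hf : Function.Surjective (LinearMap.lcomp R N f)) :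
    Function.Surjective (LinearMap.lcomp R (P →ₗ[R] N) f) := fun φ ↦
  let ⟨ψ, hψ⟩ := Module.projective_lifting_property (LinearMap.lcomp R N f) φ.flip hf
  ⟨ψ.flip, by rw [← φ.flip_flip, ← hψ]; rfl⟩

theorem ExtVanishes.hom_of_projective [Module.Projective R P] {i : ℕ}
    (h : ExtVanishes R A N (i + 1)) : ExtVanishes R A (P →ₗ[R] N) (i + 1) := by
  induction i generalizing A with
  | zero =>
    obtain ⟨K, Q, f, g, _, s⟩ := exists_isShortExact_projective R A
    rw [s.extVanishes_one_iff_of_projective] at h ⊢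
    exact lcomp_hom_surjective h
  | succ i ih =>
    obtain ⟨K, Q, f, g, _, s⟩ := exists_isShortExact_projective R A
    rw [← s.extVanishes_succ_iff_of_projective] at h ⊢
    exact ih h

theorem extVanishes_tensor_iff [Module.Projective R P] (i : ℕ) :
    ExtVanishes R (A ⊗[R] P) N (i + 1) ↔ ExtVanishes R A (P →ₗ[R] N) (i + 1) := by
  induction i generalizing A with
  | zero =>
    obtain ⟨K, Q, f, g, _, s⟩ := exists_isShortExact_projective R A
    rw [s.extVanishes_one_iff_of_projective,
      (s.rTensor (N := P)).extVanishes_one_iff_of_projective, lcomp_rTensor_surjective_iff]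
  | succ i ih =>
    obtain ⟨K, Q, f, g, _, s⟩ := exists_isShortExact_projective R A
    rw [← s.extVanishes_succ_iff_of_projective,
      ← (s.rTensor (N := P)).extVanishes_succ_iff_of_projective, ih]

end HomTensor

section Semidualizing

variable {R}

namespace IsSemidualizing

variable {C : ModuleCat.{u} R} (hC : IsSemidualizing R C)
  {A B D P : Type u} [AddCommGroup A] [AddCommGroup B] [AddCommGroup D] [AddCommGroup P]
  [Module R A] [Module R B] [Module R D] [Module R P]
include hC

theorem extVanishes_self (i : ℕ) : ExtVanishes R C C (i + 1) :=
  (subsingleton_extM_iff C C (i + 1)).mp (hC.2.2 (i + 1) i.succ_pos)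

theorem extVanishes_tensor [Module.Projective R P] (i : ℕ) :
    ExtVanishes R (C ⊗[R] P) C (i + 1) :=
  (extVanishes_tensor_iff i).mpr (hC.extVanishes_self i).hom_of_projective

/-- The homothety isomorphism `R ≃ Hom_R(C, C)`. -/
def homothetyEquiv : R ≃ₗ[R] (C →ₗ[R] C) :=
  LinearEquiv.ofBijective (LinearMap.lsmul R C) hC.2.1

theorem lcomp_end_surjective_iff (f : A →ₗ[R] B) :
    Function.Surjective (LinearMap.lcomp R (C →ₗ[R] C) f) ↔
      Function.Surjective (LinearMap.lcomp R R f) :=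
  (lcomp_surjective_congr f hC.homothetyEquiv).symm

end IsSemidualizing

variable {L : ModuleCat.{u} R} (P : ProjectiveResolution L)

/-- The syzygies of a projective resolution `P` of `L`, starting with `L` itself. -/
def resolutionSyzygy : ℕ → ModuleCat.{u} R
  | 0 => L
  | k + 1 => ModuleCat.of R (LinearMap.range (P.complex.d (k + 1) k).hom)

/-- The inclusion of a syzygy into the projective module covering the preceding one. -/
def resolutionSyzygyInclusion (k : ℕ) : resolutionSyzygy P (k + 1) →ₗ[R] P.complex.X k :=
  (LinearMap.range (P.complex.d (k + 1) k).hom).subtype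

/-- The projection of a term of a projective resolution onto the corresponding syzygy. -/
def resolutionSyzygyProjection : ∀ k, P.complex.X k →ₗ[R] resolutionSyzygy P k
  | 0 => (P.π.f 0).hom
  | k + 1 => (P.complex.d (k + 1) k).hom.rangeRestrict

theorem isShortExact_resolutionSyzygy : ∀ k,
    IsShortExact (resolutionSyzygyInclusion P k) (resolutionSyzygyProjection P k)
  | 0 =>
    { injective := Submodule.injective_subtype _
      exact := LinearMap.exact_iff.mpr <| ((ShortComplex.moduleCat_exact_iff_range_eq_ker _).mp
        P.exact₀).symm.trans (Submodule.range_subtype _).symm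
      surjective := (ModuleCat.epi_iff_surjective (P.π.f 0)).mp inferInstance }
  | k + 1 =>
    { injective := Submodule.injective_subtype _
      exact := LinearMap.exact_iff.mpr <| (LinearMap.ker_rangeRestrict _).trans <|
        ((ShortComplex.moduleCat_exact_iff_range_eq_ker _).mp
          (P.exact_succ k)).symm.trans (Submodule.range_subtype _).symm
      surjective := LinearMap.surjective_rangeRestrict _ }

theorem exact_lTensor_of_subsingleton_tor (C : ModuleCat.{u} R) (k : ℕ)
    (hT : Subsingleton (TorM R C L (k + 1))) :
    Function.Exact ((P.complex.d (k + 2) (k + 1)).hom.lTensor C)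
      ((P.complex.d (k + 1) k).hom.lTensor C) := by
  let F := (MonoidalCategory.tensoringLeft (ModuleCat.{u} R)).obj C
  let K := (F.mapHomologicalComplex (ComplexShape.down ℕ)).obj P.complex
  have isZero_homology : Limits.IsZero (K.homology (k + 1)) :=
    (ModuleCat.isZero_of_subsingleton (TorM R C L (k + 1))).of_iso
      (P.isoLeftDerivedObj F (k + 1)).symm
  have exact : (K.sc' (k + 2) (k + 1) k).Exact := by
    rwa [← HomologicalComplex.exactAt_iff' _ _ _ _ (by simp) (by simp),
      HomologicalComplex.exactAt_iff_isZero_homology]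
  exact (ShortComplex.ShortExact.moduleCat_exact_iff_function_exact _).mp exact

theorem lTensor_injective_of_exact_lTensor_comp {X Y Z W : Type u} (C : Type u)
    [AddCommGroup X] [AddCommGroup Y] [AddCommGroup Z] [AddCommGroup W] [AddCommGroup C]
    [Module R X] [Module R Y] [Module R Z] [Module R W] [Module R C]
    {d : X →ₗ[R] Y} {p : Y →ₗ[R] Z} {i : Z →ₗ[R] W} (hp : Function.Surjective p)
    (hpd : p ∘ₗ d = 0) (h : Function.Exact (d.lTensor C) ((i ∘ₗ p).lTensor C)) :
    Function.Injective (i.lTensor C) := by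
  refine (injective_iff_map_eq_zero _).mpr fun z hz ↦ ?_
  obtain ⟨y, rfl⟩ := LinearMap.lTensor_surjective C hp z
  rw [← LinearMap.comp_apply, ← LinearMap.lTensor_comp] at hz
  obtain ⟨x, rfl⟩ := (h y).mp hz
  rw [← LinearMap.comp_apply, ← LinearMap.lTensor_comp, hpd, LinearMap.lTensor_zero,
    LinearMap.zero_apply]

theorem isShortExact_lTensor_resolutionSyzygy (C : ModuleCat.{u} R) (k : ℕ)
    (hT : Subsingleton (TorM R C L (k + 1))) :
    IsShortExact ((resolutionSyzygyInclusion P k).lTensor C)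
      ((resolutionSyzygyProjection P k).lTensor C) where
  injective := by
    refine lTensor_injective_of_exact_lTensor_comp C
      (isShortExact_resolutionSyzygy P (k + 1)).surjective
      (d := (P.complex.d (k + 2) (k + 1)).hom) ?_ (exact_lTensor_of_subsingleton_tor P C k hT)
    exact LinearMap.ext fun x ↦ Subtype.ext <| LinearMap.congr_fun
      (congrArg ModuleCat.Hom.hom (P.complex.d_comp_d (k + 2) (k + 1) k)) x
  exact := lTensor_exact C (isShortExact_resolutionSyzygy P k).exact
    (isShortExact_resolutionSyzygy P k).surjective
  surjective := LinearMap.lTensor_surjective C (isShortExact_resolutionSyzygy P k).surjective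

namespace IsSemidualizing

variable {C : ModuleCat.{u} R} (hC : IsSemidualizing R C)
include hC

theorem extVanishes_tensor_resolutionSyzygy_iff
    (hT : ∀ k, Subsingleton (TorM R C L (k + 1))) (i k : ℕ) :
    ExtVanishes R (C ⊗[R] resolutionSyzygy P k) C (i + 1) ↔
      ExtVanishes R (resolutionSyzygy P k) R (i + 1) := by
  have s := isShortExact_resolutionSyzygy P k
  have sC := isShortExact_lTensor_resolutionSyzygy P C k (hT k)
  have : Module.Projective R (P.complex.X k) := (IsProjective.iff_projective _).mpr (P.projective k)
  induction i generalizing k with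
  | zero =>
    rw [sC.extVanishes_one_iff (hC.extVanishes_tensor 0), lcomp_lTensor_surjective_iff,
      hC.lcomp_end_surjective_iff, s.extVanishes_one_iff_of_projective]
  | succ i ih =>
    rw [← sC.extVanishes_iff (hC.extVanishes_tensor i) (hC.extVanishes_tensor (i + 1)),
      ← s.extVanishes_succ_iff_of_projective]
    exact ih (k + 1) (isShortExact_resolutionSyzygy P _)
      (isShortExact_lTensor_resolutionSyzygy P C _ (hT _))
      ((IsProjective.iff_projective _).mpr (P.projective _))

theorem extVanishes_tensor_iff_of_tor (L : ModuleCat.{u} R)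
    (hT : ∀ k, Subsingleton (TorM R C L (k + 1))) (i : ℕ) :
    ExtVanishes R (C ⊗[R] L) C (i + 1) ↔ ExtVanishes R L R (i + 1) :=
  hC.extVanishes_tensor_resolutionSyzygy_iff (projectiveResolution L) hT i 0

end IsSemidualizing

end Semidualizing

section Grade

variable {R}
variable {A B E N P U V : Type u} [AddCommGroup A] [AddCommGroup B] [AddCommGroup E]
  [AddCommGroup N] [AddCommGroup P] [AddCommGroup U] [AddCommGroup V] [Module R A] [Module R B]
  [Module R E] [Module R N] [Module R P] [Module R U] [Module R V]

theorem extVanishes_of_subsingleton_right [Subsingleton N] (i : ℕ) : ExtVanishes R A N i :=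
  subsingleton_of_forall_eq 0 fun x ↦ by
    rw [← x.comp_mk₀_id, (ModuleCat.isZero_of_subsingleton (ModuleCat.of R N)).eq_of_src (𝟙 _) 0,
      Abelian.Ext.mk₀_zero, Abelian.Ext.comp_zero]

theorem compRight_lcomp_surjective_iff (f : A →ₗ[R] B) :
    Function.Surjective
        ((LinearMap.lcomp R N f).compRight R : (P →ₗ[R] B →ₗ[R] N) →ₗ[R] P →ₗ[R] A →ₗ[R] N) ↔
      Function.Surjective (LinearMap.lcomp R (P →ₗ[R] N) f) :=
  (EquivLike.comp_surjective _ (LinearMap.lflip (R₀ := R))).symm.trans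
    (EquivLike.surjective_comp (LinearMap.lflip (R₀ := R)) (LinearMap.lcomp R (P →ₗ[R] N) f))

namespace IsSemidualizing

variable {C : ModuleCat.{u} R} (hC : IsSemidualizing R C)
include hC

theorem extVanishes_hom [Module.Projective R P] (i : ℕ) : ExtVanishes R C (P →ₗ[R] C) (i + 1) :=
  (hC.extVanishes_self i).hom_of_projective

theorem eq_zero_of_forall_smul_eq_zero {r : R} (hr : ∀ c : C, r • c = 0) : r = 0 :=
  (map_eq_zero_iff _ hC.homothetyEquiv.injective).mp (LinearMap.ext hr)

theorem subsingleton_dual_of_subsingleton_hom [Subsingleton (E →ₗ[R] C)] :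
    Subsingleton (E →ₗ[R] R) :=
  subsingleton_of_forall_eq 0 fun φ ↦ LinearMap.ext fun x ↦
    hC.eq_zero_of_forall_smul_eq_zero fun c ↦
      LinearMap.congr_fun (Subsingleton.elim (LinearMap.toSpanSingleton R C c ∘ₗ φ) 0) x

variable [IsNoetherianRing R]

theorem subsingleton_of_subsingleton_hom [Module.Finite R V] (h : Subsingleton (C →ₗ[R] V)) :
    Subsingleton V := by
  have := hC.1
  obtain ⟨r, hr, hreg⟩ := IsSMulRegular.subsingleton_linearMap_iff.mp h
  obtain rfl : r = 0 := hC.eq_zero_of_forall_smul_eq_zero (Module.mem_annihilator.mp hr)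
  exact ⟨fun v w ↦ hreg (by simp only [zero_smul])⟩

theorem surjective_of_compRight_surjective [Module.Finite R V] {α : U →ₗ[R] V}
    (h : ExtVanishes R C (LinearMap.range α) 1)
    (hα : Function.Surjective (α.compRight R : (C →ₗ[R] U) →ₗ[R] C →ₗ[R] V)) :
    Function.Surjective α := by
  have : Subsingleton (V ⧸ LinearMap.range α) := by
    refine hC.subsingleton_of_subsingleton_hom (subsingleton_of_forall_eq 0 fun φ ↦ ?_)
    obtain ⟨ψ, rfl⟩ := (isShortExact_subtype_mkQ (LinearMap.range α)).compRight_surjective h φ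
    obtain ⟨ξ, rfl⟩ := hα ψ
    exact LinearMap.ext fun c ↦ (Submodule.Quotient.mk_eq_zero _).mpr ⟨ξ c, rfl⟩
  exact LinearMap.range_eq_top.mp (Submodule.Quotient.subsingleton_iff.mp this)

theorem extVanishes_one_iff_self (hE : ∀ j, ExtVanishes R C (E →ₗ[R] C) (j + 1))
    [Module.Finite R E] : ExtVanishes R E C 1 ↔ ExtVanishes R E R 1 := by
  obtain ⟨K, P, f, g, _, _, s⟩ := exists_isShortExact_projective_finite R E
  have := hC.1
  rw [s.extVanishes_one_iff_of_projective, s.extVanishes_one_iff_of_projective,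
    ← hC.lcomp_end_surjective_iff, ← compRight_lcomp_surjective_iff]
  refine ⟨fun h ↦ (s.dual C h).compRight_surjective (hE 0), fun h ↦ ?_⟩
  exact hC.surjective_of_compRight_surjective
    ((isShortExact_lcomp_rangeRestrict C s.exact s.surjective).extVanishes_right
      (hC.extVanishes_hom 0) (hE 1)) h

theorem forall_extVanishes_succ_iff_self (k : ℕ) [Module.Finite R E]
    (hE : ∀ j, ExtVanishes R C (E →ₗ[R] C) (j + 1)) :
    (∀ i < k, ExtVanishes R E C (i + 1)) ↔ ∀ i < k, ExtVanishes R E R (i + 1) := by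
  induction k generalizing E with
  | zero => simp only [Nat.not_lt_zero, false_imp_iff, implies_true]
  | succ k ih =>
    obtain ⟨K, P, f, g, _, _, s⟩ := exists_isShortExact_projective_finite R E
    simp only [Nat.forall_lt_succ_left, zero_add, ← s.extVanishes_succ_iff_of_projective,
      ← hC.extVanishes_one_iff_self hE]
    refine and_congr_right fun hE₁ ↦ ih fun j ↦ ?_
    exact (s.dual C (s.lcomp_surjective hE₁)).extVanishes_right (hC.extVanishes_hom j) (hE (j + 1))

theorem forall_extVanishes_iff_self (k : ℕ) [Module.Finite R E] (hE : Subsingleton (E →ₗ[R] C)) :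
    (∀ i < k, ExtVanishes R E C i) ↔ ∀ i < k, ExtVanishes R E R i := by
  have hE' : Subsingleton (E →ₗ[R] R) := hC.subsingleton_dual_of_subsingleton_hom
  cases k with
  | zero => simp only [Nat.not_lt_zero, false_imp_iff, implies_true]
  | succ k =>
    simp only [Nat.forall_lt_succ_left, extVanishes_zero_iff, hE, hE', true_and]
    exact hC.forall_extVanishes_succ_iff_self k fun _ ↦ extVanishes_of_subsingleton_right _

end IsSemidualizing

end Grade

section Biduality

variable {R}

theorem injective_iff_surjective_of_exact {A B D A' B' D' : Type u} [AddCommGroup A]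
    [AddCommGroup B] [AddCommGroup D] [AddCommGroup A'] [AddCommGroup B'] [AddCommGroup D']
    [Module R A] [Module R B] [Module R D] [Module R A'] [Module R B'] [Module R D']
    {f : A →ₗ[R] B} {g : B →ₗ[R] D} {f' : A' →ₗ[R] B'} {g' : B' →ₗ[R] D'}
    {α : A →ₗ[R] A'} {β : B →ₗ[R] B'} {γ : D →ₗ[R] D'}
    (hfg : Function.Exact f g) (hg : Function.Surjective g)
    (hf' : Function.Injective f') (hfg' : Function.Exact f' g') (hβ : Function.Bijective β)
    (hα : f' ∘ₗ α = β ∘ₗ f) (hγ : g' ∘ₗ β = γ ∘ₗ g) :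
    Function.Injective γ ↔ Function.Surjective α := by
  have hα' (a : A) : f' (α a) = β (f a) := LinearMap.congr_fun hα a
  have hγ' (b : B) : g' (β b) = γ (g b) := LinearMap.congr_fun hγ b
  constructor
  · intro γ_inj a'
    obtain ⟨b, hb⟩ := hβ.2 (f' a')
    have gb_eq_zero : g b = 0 :=
      (map_eq_zero_iff γ γ_inj).mp (by rw [← hγ', hb, hfg'.apply_apply_eq_zero])
    obtain ⟨a, rfl⟩ := (hfg b).mp gb_eq_zero
    exact ⟨a, hf' ((hα' a).trans hb)⟩
  · refine fun α_surj ↦ (injective_iff_map_eq_zero γ).mpr fun d hd ↦ ?_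
    obtain ⟨b, rfl⟩ := hg d
    obtain ⟨a', ha'⟩ := (hfg' (β b)).mp ((hγ' b).trans hd)
    obtain ⟨a, rfl⟩ := α_surj a'
    rw [← hβ.1 ((hα' a).symm.trans ha'), hfg.apply_apply_eq_zero]

variable {C X K M : ModuleCat.{u} R} {f : K →ₗ[R] X} {g : X →ₗ[R] M}

theorem bidualityMap_naturality (C : ModuleCat.{u} R) (g : X →ₗ[R] M) :
    LinearMap.lcomp R C (LinearMap.lcomp R C g) ∘ₗ bidualityMap R C X =
      bidualityMap R C M ∘ₗ g :=
  rfl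

theorem lcomp_lcomp_surjective_iff (hX : Function.Surjective (bidualityMap R C X))
    (hg : Function.Surjective g) :
    Function.Surjective (LinearMap.lcomp R C (LinearMap.lcomp R C g)) ↔
      Function.Surjective (bidualityMap R C M) :=
  (Function.Surjective.of_comp_iff _ hX).symm.trans
    (Function.Surjective.of_comp_iff (bidualityMap R C M) hg)

namespace IsTotallyCReflexive

variable (hX : IsTotallyCReflexive R C X)
include hX

theorem extVanishes (i : ℕ) : ExtVanishes R X C (i + 1) :=
  (subsingleton_extM_iff X C (i + 1)).mp (hX.2.2.1 (i + 1) i.succ_pos)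

theorem extVanishes_dual (i : ℕ) : ExtVanishes R (X →ₗ[R] C) C (i + 1) :=
  (subsingleton_extM_iff (ModuleCat.of R (X →ₗ[R] C)) C (i + 1)).mp (hX.2.2.2 (i + 1) i.succ_pos)

end IsTotallyCReflexive

theorem gcdimLE.extVanishes {n : ℕ} (hM : gcdimLE R C n M) {i : ℕ} (hi : n < i) :
    ExtVanishes R M C i := by
  obtain ⟨i, rfl⟩ := Nat.exists_eq_add_of_lt hi
  clear hi
  induction n generalizing M with
  | zero => exact (zero_add i).symm ▸ IsTotallyCReflexive.extVanishes hM i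
  | succ n ih =>
    obtain ⟨X, K, f, g, hf, hg, hfg, hX, hK⟩ := hM
    have s : IsShortExact f g := ⟨hf, LinearMap.exact_iff.mpr hfg, hg⟩
    have h := (s.extVanishes_iff (hX.extVanishes (n + i)) (hX.extVanishes _)).mp (ih hK)
    rwa [show n + 1 + i + 1 = n + i + 1 + 1 by omega]

variable (C M) in
/-- `E` measures in which degrees, counted from `n`, the biduality of `M` with respect to `C` fails:
`Ext_R^n(E, C)` and `Ext_R^{n+1}(E, C)` play the roles of the kernel and the cokernel of the
biduality map, and the higher `Ext_R(E, C)` those of the `Ext_R^{>0}(M^C, C)`. -/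
structure IsBidualityObstruction (E : Type u) [AddCommGroup E] [Module R E] (n : ℕ) : Prop where
  extVanishes_of_lt : ∀ j < n, ExtVanishes R E C j
  extVanishes_iff_injective : ExtVanishes R E C n ↔ Function.Injective (bidualityMap R C M)
  extVanishes_succ_iff_surjective :
    ExtVanishes R E C (n + 1) ↔ Function.Surjective (bidualityMap R C M)
  extVanishes_add_two_iff :
    ∀ j, ExtVanishes R E C (n + 2 + j) ↔ ExtVanishes R (M →ₗ[R] C) C (j + 1)

variable {E E' : Type u} [AddCommGroup E] [AddCommGroup E'] [Module R E] [Module R E']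

theorem IsBidualityObstruction.of_linearEquiv {n : ℕ} (h : IsBidualityObstruction C M E n)
    (e : E ≃ₗ[R] E') : IsBidualityObstruction C M E' n where
  extVanishes_of_lt j hj := (h.extVanishes_of_lt j hj).of_linearEquiv e
  extVanishes_iff_injective :=
    (extVanishes_iff_of_linearEquiv e).symm.trans h.extVanishes_iff_injective
  extVanishes_succ_iff_surjective :=
    (extVanishes_iff_of_linearEquiv e).symm.trans h.extVanishes_succ_iff_surjective
  extVanishes_add_two_iff j :=
    (extVanishes_iff_of_linearEquiv e).symm.trans (h.extVanishes_add_two_iff j)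

namespace IsShortExact

variable (s : IsShortExact f g) (hX : IsTotallyCReflexive R C X)
include s hX

theorem bidualityMap_injective_iff {I : Type u} [AddCommGroup I] [Module R I]
    {p : (X →ₗ[R] C) →ₗ[R] I} (t : IsShortExact (LinearMap.lcomp R C g) p)
    {κ : K →ₗ[R] I →ₗ[R] C} (hκ : ∀ k χ, κ k (p χ) = χ (f k)) :
    Function.Injective (bidualityMap R C M) ↔ Function.Surjective κ :=
  injective_iff_surjective_of_exact s.exact s.surjective
    (LinearMap.lcomp_injective_of_surjective p t.surjective)
    (LinearMap.exact_lcomp_of_exact_of_surjective C t.exact t.surjective) hX.2.1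
    (LinearMap.ext fun k ↦ LinearMap.ext (hκ k)) (bidualityMap_naturality C g)

theorem extVanishes_one_iff_bidualityMap_surjective {I : Type u} [AddCommGroup I] [Module R I]
    {p : (X →ₗ[R] C) →ₗ[R] I} (t : IsShortExact (LinearMap.lcomp R C g) p) :
    ExtVanishes R I C 1 ↔ Function.Surjective (bidualityMap R C M) :=
  (t.extVanishes_one_iff (hX.extVanishes_dual 0)).trans
    (lcomp_lcomp_surjective_iff hX.2.1.2 s.surjective)

theorem lcomp_lcomp_comp_bidualityMap_injective :
    Function.Injective (LinearMap.lcomp R C (LinearMap.lcomp R C f) ∘ bidualityMap R C K) :=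
  hX.2.1.1.comp s.injective

theorem isBidualityObstruction_one (hK : IsTotallyCReflexive R C K) :
    IsBidualityObstruction C M ((K →ₗ[R] C) ⧸ LinearMap.range (LinearMap.lcomp R C f)) 1 := by
  have q := isShortExact_subtype_mkQ (LinearMap.range (LinearMap.lcomp R C f))
  have t := isShortExact_lcomp_rangeRestrict C s.exact s.surjective
  refine ⟨fun j hj ↦ ?_, ?_, ?_, fun j ↦ ?_⟩
  · obtain rfl : j = 0 := by omega
    have bidual_injective : Function.Injective (LinearMap.lcomp R C (LinearMap.lcomp R C f)) :=
      (Function.Injective.of_comp_iff' _ hK.2.1).mp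
        (s.lcomp_lcomp_comp_bidualityMap_injective hX)
    refine extVanishes_zero_iff.mpr (subsingleton_of_forall_eq 0 fun φ ↦ ?_)
    have comp_mkQ_eq_zero : φ ∘ₗ (LinearMap.range (LinearMap.lcomp R C f)).mkQ = 0 := by
      refine bidual_injective (LinearMap.ext fun χ ↦ ?_)
      exact (congrArg φ ((Submodule.Quotient.mk_eq_zero _).mpr ⟨χ, rfl⟩)).trans (map_zero φ)
    exact Submodule.linearMap_qext _ comp_mkQ_eq_zero
  · let ι := (LinearMap.range (LinearMap.lcomp R C f)).subtype
    rw [q.extVanishes_one_iff (hK.extVanishes_dual 0),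
      s.bidualityMap_injective_iff hX t (κ := LinearMap.lcomp R C ι ∘ₗ bidualityMap R C K)
        fun _ _ ↦ rfl]
    exact (Function.Surjective.of_comp_iff (LinearMap.lcomp R C ι) hK.2.1.2).symm
  · rw [← q.extVanishes_iff (hK.extVanishes_dual 0) (hK.extVanishes_dual 1)]
    exact s.extVanishes_one_iff_bidualityMap_surjective hX t
  · rw [show 1 + 2 + j = j + 2 + 1 by omega,
      ← q.extVanishes_iff (hK.extVanishes_dual (j + 1)) (hK.extVanishes_dual (j + 2)),
      t.extVanishes_iff (hX.extVanishes_dual j) (hX.extVanishes_dual (j + 1))]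

theorem isBidualityObstruction_succ (hM : ExtVanishes R M C 1) {n : ℕ}
    (hE : IsBidualityObstruction C K E n) : IsBidualityObstruction C M E (n + 1) := by
  have t := s.dual C (s.lcomp_surjective hM)
  refine ⟨Nat.forall_lt_succ_right.mpr ⟨hE.extVanishes_of_lt, ?_⟩, ?_, ?_, fun j ↦ ?_⟩
  · exact hE.extVanishes_iff_injective.mpr
      (s.lcomp_lcomp_comp_bidualityMap_injective hX).of_comp
  · rw [hE.extVanishes_succ_iff_surjective]
    exact (s.bidualityMap_injective_iff hX t fun _ _ ↦ rfl).symm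
  · exact (hE.extVanishes_add_two_iff 0).trans
      (s.extVanishes_one_iff_bidualityMap_surjective hX t)
  · rw [show n + 1 + 2 + j = n + 2 + (j + 1) by omega, hE.extVanishes_add_two_iff,
      ← t.extVanishes_iff (hX.extVanishes_dual j) (hX.extVanishes_dual (j + 1))]

end IsShortExact

theorem isBidualityObstruction_of_gcdimLE {n : ℕ} (hM : gcdimLE R C (n + 1) M)
    (hv : ∀ i < n, ExtVanishes R M C (i + 1))
    (e : E ≃ₗ[R] Abelian.Ext (ModuleCat.of R M) (ModuleCat.of R C) (n + 1)) :
    IsBidualityObstruction C M E (n + 1) := by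
  induction n generalizing M with
  | zero =>
    obtain ⟨X, K, f, g, hf, hg, hfg, hX, hK⟩ := hM
    have s : IsShortExact f g := ⟨hf, LinearMap.exact_iff.mpr hfg, hg⟩
    obtain ⟨e'⟩ := s.nonempty_quotient_range_lcomp_linearEquiv_ext_one (hX.extVanishes 0)
    exact (s.isBidualityObstruction_one hX hK).of_linearEquiv (e' ≪≫ₗ e.symm)
  | succ n ih =>
    obtain ⟨X, K, f, g, hf, hg, hfg, hX, hK⟩ := hM
    have s : IsShortExact f g := ⟨hf, LinearMap.exact_iff.mpr hfg, hg⟩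
    rw [Nat.forall_lt_succ_left] at hv
    let δ := LinearEquiv.ofBijective (s.extConnecting C (n + 1))
      ⟨s.extConnecting_injective (hX.extVanishes n),
        s.extConnecting_surjective (hX.extVanishes (n + 1))⟩
    refine s.isBidualityObstruction_succ hX hv.1 (ih hK (fun i hi ↦ ?_) (e ≪≫ₗ δ.symm))
    exact (s.extVanishes_iff (hX.extVanishes i) (hX.extVanishes (i + 1))).mpr (hv.2 i hi)

end Biduality

section Linkage

variable {R}

section Superfluous

variable {P Q : Type u} [AddCommGroup P] [AddCommGroup Q] [Module R P] [Module R Q]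
  {K : Submodule R P}

/-- A submodule `K` is superfluous if no proper submodule together with `K` spans the whole
module. -/
def IsSuperfluous (K : Submodule R P) : Prop :=
  ∀ N : Submodule R P, N ⊔ K = ⊤ → N = ⊤

theorem IsSuperfluous.le_jacobson (hK : IsSuperfluous K) : K ≤ Module.jacobson R P :=
  le_sInf fun N hN ↦ by
    by_contra hKN
    exact hN.1 (hK N (hN.2 _ (left_lt_sup.mpr hKN)))

theorem IsSuperfluous.apply_mem_jacobson (hK : IsSuperfluous K) (f : P →ₗ[R] R) {x : P}
    (hx : x ∈ K) : f x ∈ Ring.jacobson R :=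
  Module.le_comap_jacobson f (hK.le_jacobson hx)

theorem isSuperfluous_of_le_jacobson_smul_top [Module.Finite R P]
    (hK : K ≤ Ring.jacobson R • (⊤ : Submodule R P)) : IsSuperfluous K := fun N hN ↦
  top_le_iff.mp <| Submodule.le_of_le_smul_of_le_jacobson_bot Module.Finite.fg_top
    Ideal.jacobson_bot.ge (hN.ge.trans (sup_le_sup_left hK N))

theorem mem_smul_top_of_range_le [Module.Finite R P] [Module.Projective R P] {I : Ideal R}
    {f : P →ₗ[R] R} (hf : LinearMap.range f ≤ I) : f ∈ I • (⊤ : Submodule R (P →ₗ[R] R)) := by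
  obtain ⟨n, g, s, -, -, hgs⟩ := Module.Finite.exists_comp_eq_id_of_projective R P
  have hf_sum : f = ∑ i, f (g (Pi.single i 1)) • (LinearMap.proj i ∘ₗ s) := by
    ext x
    conv_lhs => rw [← LinearMap.id_apply (R := R) x, ← hgs, LinearMap.comp_apply,
      pi_eq_sum_univ' (s x)]
    simp [mul_comm]
  rw [hf_sum]
  exact Submodule.sum_mem _ fun i _ ↦
    Submodule.smul_mem_smul (hf (LinearMap.mem_range_self f _)) Submodule.mem_top

theorem IsSuperfluous.comap_linearEquiv (hK : IsSuperfluous K) (e : Q ≃ₗ[R] P) :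
    IsSuperfluous (K.comap e.toLinearMap) := fun N hN ↦ by
  have map_sup_eq_top : N.map e.toLinearMap ⊔ K = ⊤ := by
    have := congrArg (Submodule.map e.toLinearMap) hN
    rwa [Submodule.map_sup, Submodule.map_comap_eq_of_surjective e.surjective, Submodule.map_top,
      LinearEquiv.range] at this
  exact Submodule.map_injective_of_injective e.injective
    ((hK _ map_sup_eq_top).trans (by rw [Submodule.map_top, LinearEquiv.range]))

theorem IsSuperfluous.surjective_of_comp_surjective {A B : Type u} [AddCommGroup A]
    [AddCommGroup B] [Module R A] [Module R B] {g : A →ₗ[R] B} {h : P →ₗ[R] A}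
    (hg : IsSuperfluous (LinearMap.ker g)) (hgh : Function.Surjective (g ∘ₗ h)) :
    Function.Surjective h :=
  LinearMap.range_eq_top.mp <| hg _ <| top_le_iff.mp fun a _ ↦ by
    obtain ⟨x, hx⟩ := hgh (g a)
    exact Submodule.mem_sup.mpr ⟨h x, LinearMap.mem_range_self h x, a - h x,
      by rw [LinearMap.mem_ker, map_sub, sub_eq_zero, ← hx, LinearMap.comp_apply],
      add_sub_cancel (h x) a⟩

theorem isSuperfluous_ker_of_isSuperfluous_ker {L : Type u} [AddCommGroup L] [Module R L]
    [Module.Projective R P] [Module.Projective R Q] {p : P →ₗ[R] L} {q : Q →ₗ[R] L}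
    (hp : Function.Surjective p) (hq : Function.Surjective q)
    (hqs : IsSuperfluous (LinearMap.ker q))
    (subsingleton_of_retract : ∀ (S : Submodule R P) (r : P →ₗ[R] S),
      r ∘ₗ S.subtype = LinearMap.id → S ≤ LinearMap.ker p → Subsingleton S) :
    IsSuperfluous (LinearMap.ker p) := by
  obtain ⟨t, rfl⟩ := Module.projective_lifting_property q p hq
  have t_surjective : Function.Surjective t := hqs.surjective_of_comp_surjective hp
  obtain ⟨-, r, hr⟩ :
      Function.Surjective t ∧ ∃ r, r ∘ₗ (LinearMap.ker t).subtype = LinearMap.id :=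
    ((LinearMap.exact_subtype_ker_map t).split_tfae'.out 0 1 rfl rfl).mp
      ⟨Submodule.injective_subtype _, Module.projective_lifting_property t .id t_surjective⟩
  have t_injective : Function.Injective t := LinearMap.ker_eq_bot.mp <|
    Submodule.subsingleton_iff_eq_bot.mp <|
      subsingleton_of_retract _ r hr (LinearMap.ker_le_ker_comp t q)
  rw [LinearMap.ker_comp]
  exact hqs.comap_linearEquiv (LinearEquiv.ofBijective t ⟨t_injective, t_surjective⟩)

end Superfluous

namespace IsStable

variable {M : ModuleCat.{u} R} (hM : IsStable R M)
include hM

theorem subsingleton_of_surjective {Q : Type u} [AddCommGroup Q] [Module R Q]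
    [Module.Projective R Q] {a : M →ₗ[R] Q} (ha : Function.Surjective a) : Subsingleton Q := by
  obtain ⟨b, hb⟩ := Module.projective_lifting_property a LinearMap.id ha
  have splitting := lequivProdOfRightSplitExact (LinearMap.ker a).injective_subtype
    (Submodule.range_subtype _) hb
  exact hM (.of R Q) (.of R (LinearMap.ker a)) ‹_›
    ⟨splitting.symm ≪≫ₗ LinearEquiv.prodComm R _ _⟩

-- A retract `S` of `P^*` inside `M^*` gives a surjection `P = P^** → S^*` factoring through `M`.
theorem subsingleton_of_retract_dual {P S : Type u} [AddCommGroup P] [AddCommGroup S] [Module R P]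
    [Module R S] [Module.Finite R P] [Module.Projective R P] [Module.Finite R S]
    [Module.Projective R S] {π : P →ₗ[R] M} (hπ : Function.Surjective π)
    {j : S →ₗ[R] P →ₗ[R] R} {r : (P →ₗ[R] R) →ₗ[R] S} (hrj : r ∘ₗ j = LinearMap.id)
    (hj : ∀ s, LinearMap.ker π ≤ LinearMap.ker (j s)) : Subsingleton S := by
  have lcomp_surjective : Function.Surjective (LinearMap.lcomp R R j) := fun φ ↦
    ⟨φ ∘ₗ r, by rw [LinearMap.lcomp_apply', LinearMap.comp_assoc, hrj, LinearMap.comp_id]⟩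
  have flip_surjective : Function.Surjective j.flip :=
    lcomp_surjective.comp (Module.evalEquiv R P).surjective
  obtain ⟨a, ha⟩ := (LinearMap.exact_lcomp_of_exact_of_surjective (S →ₗ[R] R)
    (LinearMap.exact_subtype_ker_map π) hπ j.flip).mp
      (LinearMap.ext fun x ↦ LinearMap.ext fun s ↦ hj s x.2)
  rw [LinearMap.lcomp_apply'] at ha
  have a_surjective : Function.Surjective a :=
    Function.Surjective.of_comp (g := π) (by rwa [← LinearMap.coe_comp, ha])
  have : Module.Projective R (S →ₗ[R] R) := inferInstanceAs (Module.Projective R (Module.Dual R S))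
  have := hM.subsingleton_of_surjective a_surjective
  exact (Module.evalEquiv R S).toEquiv.subsingleton

end IsStable

/-- The module `λM = ΩTr M` of a module `M` presented by `d`: the image of the dual of `d`. -/
abbrev presentationLambda {P₁ P₀ : Type u} [AddCommGroup P₁] [AddCommGroup P₀] [Module R P₁]
    [Module R P₀] (d : P₁ →ₗ[R] P₀) : Submodule R (P₁ →ₗ[R] R) :=
  LinearMap.range (LinearMap.lcomp R R d)

theorem exists_isMinimalPresentation [IsNoetherianRing R] (hR : IsSemiperfectRing R)
    {P₀ M : ModuleCat.{u} R} [Module.Finite R P₀] {π : P₀ →ₗ[R] M} (hπ : IsProjectiveCover R π) :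
    ∃ (P₁ : ModuleCat.{u} R) (d : P₁ →ₗ[R] P₀), IsMinimalPresentation R d π := by
  obtain ⟨P₁, q, P₁_finite, P₁_projective, hq, hqs⟩ :=
    hR (.of R (LinearMap.ker π)) (inferInstanceAs (Module.Finite R (LinearMap.ker π)))
  have ker_eq : LinearMap.ker ((LinearMap.ker π).subtype ∘ₗ q) = LinearMap.ker q :=
    LinearMap.ker_comp_of_ker_eq_bot q (Submodule.ker_subtype _)
  have range_eq : LinearMap.range ((LinearMap.ker π).subtype ∘ₗ q) = LinearMap.ker π :=
    (LinearMap.range_comp_of_range_eq_top _ (LinearMap.range_eq_top.mpr hq)).trans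
      (Submodule.range_subtype _)
  exact ⟨P₁, (LinearMap.ker π).subtype ∘ₗ q, P₁_finite, ‹_›, hπ, range_eq, P₁_projective,
    ker_eq ▸ hqs⟩

namespace IsMinimalPresentation

variable {P₁ P₀ M : ModuleCat.{u} R} {d : P₁ →ₗ[R] P₀} {π : P₀ →ₗ[R] M}
  (h : IsMinimalPresentation R d π)
include h

theorem finite_left : Module.Finite R P₁ := h.1

theorem finite_right : Module.Finite R P₀ := h.2.1

theorem projective_left : Module.Projective R P₁ := h.2.2.2.2.1

theorem projective_right : Module.Projective R P₀ := h.2.2.1.1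

theorem surjective : Function.Surjective π := h.2.2.1.2.1

theorem exact : Function.Exact d π := LinearMap.exact_iff.mpr h.2.2.2.1.symm

theorem isSuperfluous_presentationLambda : IsSuperfluous (presentationLambda d) := by
  have := h.finite_left
  have := h.projective_left
  have : Module.Finite R (P₁ →ₗ[R] R) := inferInstanceAs (Module.Finite R (Module.Dual R P₁))
  refine isSuperfluous_of_le_jacobson_smul_top ?_
  rintro _ ⟨f, rfl⟩
  refine mem_smul_top_of_range_le ?_
  rintro _ ⟨x, rfl⟩
  have ker_superfluous : IsSuperfluous (LinearMap.ker π) := h.2.2.1.2.2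
  exact ker_superfluous.apply_mem_jacobson f (h.exact.apply_apply_eq_zero x)

theorem isLambda : IsLambda R M (.of R (presentationLambda d)) := by
  have := h.finite_left
  have := h.projective_left
  exact ⟨.of R ((P₁ →ₗ[R] R) ⧸ presentationLambda d),
    ⟨P₁, P₀, d, π, h, ⟨LinearEquiv.refl R ((P₁ →ₗ[R] R) ⧸ presentationLambda d)⟩⟩,
    .of R (P₁ →ₗ[R] R), (presentationLambda d).mkQ,
    inferInstanceAs (Module.Finite R (Module.Dual R P₁)),
    ⟨inferInstanceAs (Module.Projective R (Module.Dual R P₁)), Submodule.mkQ_surjective _,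
      by rw [Submodule.ker_mkQ]; exact h.isSuperfluous_presentationLambda⟩,
    ⟨LinearEquiv.ofEq (presentationLambda d) _ (Submodule.ker_mkQ _).symm⟩⟩

theorem isProjectiveCover_dual [IsNoetherianRing R] (hR : IsSemiperfectRing R)
    (hM : IsStable R M) :
    IsProjectiveCover R (P := .of R (P₀ →ₗ[R] R)) (M := .of R (presentationLambda d))
      (LinearMap.lcomp R R d).rangeRestrict := by
  have := h.finite_right
  have := h.projective_right
  have D_finite : Module.Finite R (P₀ →ₗ[R] R) :=
    inferInstanceAs (Module.Finite R (Module.Dual R P₀))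
  have D_projective : Module.Projective R (P₀ →ₗ[R] R) :=
    inferInstanceAs (Module.Projective R (Module.Dual R P₀))
  have p_surjective := LinearMap.surjective_rangeRestrict (LinearMap.lcomp R R d)
  obtain ⟨Q, q, -, Q_projective, q_surjective, hq⟩ := hR (.of R (presentationLambda d))
    (Module.Finite.of_surjective (LinearMap.lcomp R R d).rangeRestrict p_surjective)
  refine ⟨D_projective, p_surjective,
    isSuperfluous_ker_of_isSuperfluous_ker p_surjective q_surjective hq fun S r hr hS ↦ ?_⟩
  have : Module.Projective R S := .of_split _ r hr
  refine hM.subsingleton_of_retract_dual h.surjective hr fun s x hx ↦ ?_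
  obtain ⟨y, rfl⟩ := (h.exact x).mp hx
  exact LinearMap.congr_fun (congrArg Subtype.val (hS s.2)) y

end IsMinimalPresentation

theorem ker_flip_eq_ker_eval_comp {P Q M : Type u} [AddCommGroup P] [AddCommGroup Q]
    [AddCommGroup M] [Module R P] [Module R Q] [Module R M] {π : P →ₗ[R] M}
    {d : Q →ₗ[R] P →ₗ[R] R} (hd : LinearMap.range d = LinearMap.range (LinearMap.lcomp R R π)) :
    LinearMap.ker d.flip = LinearMap.ker (Module.Dual.eval R M ∘ₗ π) := by
  ext x
  have annihilates_iff {N : Type u} [AddCommGroup N] [Module R N] (φ : N →ₗ[R] P →ₗ[R] R) :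
      (∀ y, φ y x = 0) ↔ ∀ f ∈ LinearMap.range φ, f x = 0 :=
    (Set.forall_mem_range (p := fun f : P →ₗ[R] R ↦ f x = 0)).symm
  calc d.flip x = 0 ↔ ∀ y, d y x = 0 := LinearMap.ext_iff
    _ ↔ ∀ φ : M →ₗ[R] R, φ (π x) = 0 := by
      rw [annihilates_iff d, hd, ← annihilates_iff]; rfl
    _ ↔ Module.Dual.eval R M (π x) = 0 :=
      (LinearMap.ext_iff (f := Module.Dual.eval R M (π x)) (g := 0)).symm

theorem IsHorizontallyLinked.injective_eval {M : ModuleCat.{u} R}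
    (h : IsHorizontallyLinked R M) : Function.Injective (Module.Dual.eval R M) := by
  obtain ⟨L, L₂, -, ⟨T, -, P, ρ, -, ⟨P_projective, -⟩, ⟨e⟩⟩, ⟨e'⟩⟩ := h
  let j : M →ₗ[R] P := (LinearMap.ker ρ).subtype ∘ₗ (e' ≪≫ₗ e).toLinearMap
  have hj : Function.Injective j :=
    (Submodule.injective_subtype _).comp (e' ≪≫ₗ e).injective
  refine (injective_iff_map_eq_zero _).mpr fun m hm ↦ (map_eq_zero_iff j hj).mp ?_
  exact (Module.forall_dual_apply_eq_zero_iff R _).mp fun φ ↦ LinearMap.congr_fun hm (φ ∘ₗ j)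

theorem IsMinimalPresentation.isHorizontallyLinked_iff [IsNoetherianRing R]
    (hR : IsSemiperfectRing R) {P₁ P₀ M : ModuleCat.{u} R} (hM : IsStable R M) {d : P₁ →ₗ[R] P₀}
    {π : P₀ →ₗ[R] M} (h : IsMinimalPresentation R d π) :
    IsHorizontallyLinked R M ↔ Function.Injective (Module.Dual.eval R M) := by
  refine ⟨IsHorizontallyLinked.injective_eval, fun eval_injective ↦ ?_⟩
  have := h.finite_right
  have := h.projective_right
  have : Module.Finite R (ModuleCat.of R (P₀ →ₗ[R] R)) :=
    inferInstanceAs (Module.Finite R (Module.Dual R P₀))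
  obtain ⟨Q, d₂, h₂⟩ := exists_isMinimalPresentation hR (h.isProjectiveCover_dual hR hM)
  have range_d₂ : LinearMap.range d₂ = LinearMap.range (LinearMap.lcomp R R π) := by
    rw [h₂.2.2.2.1, LinearMap.ker_rangeRestrict]
    exact (LinearMap.exact_lcomp_of_exact_of_surjective R h.exact h.surjective).linearMap_ker_eq
  have ker_π : LinearMap.ker π = LinearMap.ker (LinearMap.flip d₂) := by
    rw [ker_flip_eq_ker_eval_comp range_d₂,
      LinearMap.ker_comp_of_ker_eq_bot _ (LinearMap.ker_eq_bot.mpr eval_injective)]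
  have range_flip : LinearMap.range (LinearMap.flip d₂) = presentationLambda d₂ :=
    LinearMap.range_comp_of_range_eq_top (LinearMap.lcomp R R d₂)
      (Module.evalEquiv R P₀).range
  exact ⟨_, _, h.isLambda, h₂.isLambda,
    ⟨(π.quotKerEquivOfSurjective h.surjective).symm ≪≫ₗ Submodule.quotEquivOfEq _ _ ker_π ≪≫ₗ
      (LinearMap.flip d₂).quotKerEquivRange ≪≫ₗ LinearEquiv.ofEq _ _ range_flip⟩⟩

end Linkage

section LambdaComparison

variable {R}
variable {P Q L M N : Type u} [AddCommGroup P] [AddCommGroup Q] [AddCommGroup L] [AddCommGroup M]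
  [AddCommGroup N] [Module R P] [Module R Q] [Module R L] [Module R M] [Module R N]

/-- The map `L ⊗ N → Hom_R(P, N)` sending `l ⊗ n` to `x ↦ ι l x • n`, where `ι` views the elements
of `L` as linear forms on `P`. -/
def formsTensorHom (ι : L →ₗ[R] P →ₗ[R] R) (N : Type u) [AddCommGroup N] [Module R N] :
    L ⊗[R] N →ₗ[R] P →ₗ[R] N :=
  dualTensorHom R P N ∘ₗ ι.rTensor N

theorem formsTensorHom_tmul_apply (ι : L →ₗ[R] P →ₗ[R] R) (l : L) (n : N) (x : P) :
    formsTensorHom ι N (l ⊗ₜ[R] n) x = ι l x • n :=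
  rfl

section

variable {d : Q →ₗ[R] P} {ι : L →ₗ[R] Q →ₗ[R] R} {p : (P →ₗ[R] R) →ₗ[R] L}

theorem formsTensorHom_comp_rTensor (N : Type u) [AddCommGroup N] [Module R N]
    (hp : ι ∘ₗ p = LinearMap.lcomp R R d) :
    formsTensorHom ι N ∘ₗ p.rTensor N = LinearMap.lcomp R N d ∘ₗ dualTensorHom R P N := by
  refine TensorProduct.ext' fun φ n ↦ LinearMap.ext fun x ↦ ?_
  exact congrArg (· • n) (LinearMap.congr_fun (LinearMap.congr_fun hp φ) x)

variable [Module.Finite R P] [Module.Projective R P]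

theorem range_formsTensorHom (N : Type u) [AddCommGroup N] [Module R N]
    (hp : ι ∘ₗ p = LinearMap.lcomp R R d) (hp_surj : Function.Surjective p) :
    LinearMap.range (formsTensorHom ι N) = LinearMap.range (LinearMap.lcomp R N d) := by
  rw [← LinearMap.range_comp_of_range_eq_top _
      (LinearMap.range_eq_top.mpr (LinearMap.rTensor_surjective N hp_surj)),
    formsTensorHom_comp_rTensor N hp]
  exact LinearMap.range_comp_of_range_eq_top _ (dualTensorHomEquiv R P N).range

theorem dualTensorHom_surjective_of_formsTensorHom_injective {π : P →ₗ[R] M}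
    (hd : Function.Exact d π) (hπ : Function.Surjective π)
    (hp : ι ∘ₗ p = LinearMap.lcomp R R d) (hp_exact : Function.Exact (LinearMap.lcomp R R π) p)
    (hp_surj : Function.Surjective p) (hN : Function.Injective (formsTensorHom ι N)) :
    Function.Surjective (dualTensorHom R M N) := fun ψ ↦ by
  obtain ⟨z, hz⟩ := (dualTensorHomEquiv R P N).surjective (ψ ∘ₗ π)
  replace hz : dualTensorHom R P N z = LinearMap.lcomp R N π ψ := hz
  have exact_lcomp := LinearMap.exact_lcomp_of_exact_of_surjective N hd hπ
  have rTensor_eq_zero : p.rTensor N z = 0 := by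
    refine (map_eq_zero_iff (formsTensorHom ι N) hN).mp ?_
    rw [← LinearMap.comp_apply, formsTensorHom_comp_rTensor N hp, LinearMap.comp_apply, hz,
      exact_lcomp.apply_apply_eq_zero]
  obtain ⟨w, hw⟩ := (rTensor_exact N hp_exact hp_surj z).mp rTensor_eq_zero
  refine ⟨w, LinearMap.lcomp_injective_of_surjective (S := R) (N := N) π hπ ?_⟩
  calc LinearMap.lcomp R N π (dualTensorHom R M N w)
      = dualTensorHom R P N ((LinearMap.lcomp R R π).rTensor N w) :=
        (LinearMap.congr_fun (dualTensorHom_comp_rTensor_dualMap π) w).symm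
    _ = LinearMap.lcomp R N π ψ := by rw [hw, hz]

end

theorem eval_injective_of_bidualityMap_injective {C M : ModuleCat.{u} R}
    (hM : Function.Surjective (dualTensorHom R M C))
    (h : Function.Injective (bidualityMap R C M)) :
    Function.Injective (Module.Dual.eval R M) := by
  refine (injective_iff_map_eq_zero _).mpr fun m hm ↦ (map_eq_zero_iff _ h).mp ?_
  have comp_eq_zero : bidualityMap R C M m ∘ₗ dualTensorHom R M C = 0 :=
    TensorProduct.ext' fun φ c ↦ (congrArg (· • c) (LinearMap.congr_fun hm φ)).trans (zero_smul R c)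
  exact LinearMap.ext (hM.forall.mpr (LinearMap.congr_fun comp_eq_zero))

namespace IsSemidualizing

variable {C : ModuleCat.{u} R} (hC : IsSemidualizing R C)
include hC

theorem bidualityMap_injective {M : ModuleCat.{u} R}
    (h : Function.Injective (Module.Dual.eval R M)) :
    Function.Injective (bidualityMap R C M) := by
  refine (injective_iff_map_eq_zero _).mpr fun m hm ↦ (map_eq_zero_iff _ h).mp ?_
  exact LinearMap.ext fun φ ↦ hC.eq_zero_of_forall_smul_eq_zero fun c ↦
    LinearMap.congr_fun hm (LinearMap.toSpanSingleton R C c ∘ₗ φ)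

theorem bidualityMap_surjective_of_projective (P : ModuleCat.{u} R) [Module.Finite R P]
    [Module.Projective R P] : Function.Surjective (bidualityMap R C P) := fun Φ ↦ by
  obtain ⟨x, hx⟩ := (Module.evalEquiv R P).surjective
    (hC.homothetyEquiv.symm.toLinearMap ∘ₗ TensorProduct.curry (Φ ∘ₗ dualTensorHom R P C))
  have agree_on_tensors : bidualityMap R C P x ∘ₗ dualTensorHom R P C = Φ ∘ₗ dualTensorHom R P C :=
    TensorProduct.ext' fun φ c ↦ by
      have homothety_eq : hC.homothetyEquiv (φ x) =
          TensorProduct.curry (Φ ∘ₗ dualTensorHom R P C) φ :=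
        hC.homothetyEquiv.eq_symm_apply.mp (LinearMap.congr_fun hx φ)
      exact LinearMap.congr_fun homothety_eq c
  exact ⟨x, LinearMap.ext ((dualTensorHomEquiv R P C).surjective.forall.mpr
    (LinearMap.congr_fun agree_on_tensors))⟩

theorem extVanishes_dual_of_projective [Module.Finite R P] [Module.Projective R P] (i : ℕ) :
    ExtVanishes R (P →ₗ[R] C) C (i + 1) :=
  have : Module.Projective R (Module.Dual R P) := inferInstance
  (hC.extVanishes_tensor (P := Module.Dual R P) i).of_linearEquiv
    (TensorProduct.comm R C (Module.Dual R P) ≪≫ₗ dualTensorHomEquiv R P C)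

variable [IsNoetherianRing R]

theorem formsTensorHom_injective [Module.Finite R L] {ι : L →ₗ[R] P →ₗ[R] R}
    (hι : Function.Injective ι) (hL : Function.Surjective (TensorProduct.mk R L C)) :
    Function.Injective (formsTensorHom ι C) := by
  have := hC.1
  suffices Subsingleton (LinearMap.ker (formsTensorHom ι C)) from
    LinearMap.ker_eq_bot.mp (Submodule.subsingleton_iff_eq_bot.mp this)
  refine hC.subsingleton_of_subsingleton_hom (subsingleton_of_forall_eq 0 fun φ ↦ ?_)
  obtain ⟨l, hl⟩ := hL ((LinearMap.ker (formsTensorHom ι C)).subtype ∘ₗ φ)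
  have tmul_eq (c : C) : l ⊗ₜ[R] c = (φ c).1 := LinearMap.congr_fun hl c
  have form_eq_zero : ι l = 0 := LinearMap.ext fun x ↦
    hC.eq_zero_of_forall_smul_eq_zero fun c ↦ by
      rw [← formsTensorHom_tmul_apply, tmul_eq, LinearMap.mem_ker.mp (φ c).2, LinearMap.zero_apply]
  obtain rfl : l = 0 := (map_eq_zero_iff ι hι).mp form_eq_zero
  exact LinearMap.ext fun c ↦ Subtype.ext ((tmul_eq c).symm.trans (TensorProduct.zero_tmul _ c))

end IsSemidualizing

namespace IsMinimalPresentation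

variable [IsNoetherianRing R] {C P₁ P₀ M : ModuleCat.{u} R} {d : P₁ →ₗ[R] P₀} {π : P₀ →ₗ[R] M}
  (h : IsMinimalPresentation R d π) (hC : IsSemidualizing R C)
include h hC

theorem formsTensorHom_subtype_injective
    (hb : Function.Surjective (TensorProduct.mk R (presentationLambda d) C)) :
    Function.Injective
      (formsTensorHom (L := presentationLambda d) (presentationLambda d).subtype C) := by
  have := h.finite_right
  have := h.projective_right
  have : Module.Finite R (P₀ →ₗ[R] R) := inferInstanceAs (Module.Finite R (Module.Dual R P₀))
  exact hC.formsTensorHom_injective (Submodule.injective_subtype _) hb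

theorem bidualityMap_injective_iff
    (hb : Function.Surjective (TensorProduct.mk R (presentationLambda d) C)) :
    Function.Injective (bidualityMap R C M) ↔ Function.Injective (Module.Dual.eval R M) := by
  have := h.finite_right
  have := h.projective_right
  refine ⟨eval_injective_of_bidualityMap_injective ?_, hC.bidualityMap_injective⟩
  have hses := isShortExact_lcomp_rangeRestrict R h.exact h.surjective
  exact dualTensorHom_surjective_of_formsTensorHom_injective (L := presentationLambda d) h.exact
    h.surjective rfl hses.exact hses.surjective (h.formsTensorHom_subtype_injective hC hb)

variable (hb : Function.Surjective (TensorProduct.mk R (presentationLambda d) C))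
  (hT : ∀ k, Subsingleton (TorM R C (.of R (presentationLambda d)) (k + 1)))
include hb hT

theorem extVanishes_presentationLambda_iff (i : ℕ) :
    ExtVanishes R (presentationLambda d) R (i + 1) ↔
      ExtVanishes R (LinearMap.range (LinearMap.lcomp R C d)) C (i + 1) := by
  have := h.finite_right
  have := h.projective_right
  let e : C ⊗[R] presentationLambda d ≃ₗ[R] LinearMap.range (LinearMap.lcomp R C d) :=
    TensorProduct.comm R C (presentationLambda d) ≪≫ₗ
      LinearEquiv.ofInjective _ (h.formsTensorHom_subtype_injective hC hb) ≪≫ₗ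
      LinearEquiv.ofEq _ _ (range_formsTensorHom (L := presentationLambda d) C rfl
        (LinearMap.surjective_rangeRestrict _))
  exact (hC.extVanishes_tensor_iff_of_tor (.of R (presentationLambda d)) hT i).symm.trans
    (extVanishes_iff_of_linearEquiv e)

theorem extVanishes_presentationLambda_one_iff :
    ExtVanishes R (presentationLambda d) R 1 ↔ Function.Surjective (bidualityMap R C M) := by
  have := h.finite_right
  have := h.projective_right
  rw [h.extVanishes_presentationLambda_iff hC hb hT 0,
    (isShortExact_lcomp_rangeRestrict C h.exact h.surjective).extVanishes_one_iff
      (hC.extVanishes_dual_of_projective 0)]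
  exact lcomp_lcomp_surjective_iff (hC.bidualityMap_surjective_of_projective P₀) h.surjective

theorem extVanishes_presentationLambda_add_two_iff (i : ℕ) :
    ExtVanishes R (presentationLambda d) R (i + 2) ↔ ExtVanishes R (M →ₗ[R] C) C (i + 1) := by
  have := h.finite_right
  have := h.projective_right
  rw [h.extVanishes_presentationLambda_iff hC hb hT (i + 1)]
  exact ((isShortExact_lcomp_rangeRestrict C h.exact h.surjective).extVanishes_iff
    (hC.extVanishes_dual_of_projective i) (hC.extVanishes_dual_of_projective (i + 1))).symm

end IsMinimalPresentation

end LambdaComparison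

section GradeOfExt

variable {R}

theorem natCast_le_sInf_image {S : Set ℕ} {k : ℕ} :
    (k : ℕ∞) ≤ sInf ((fun i : ℕ ↦ (i : ℕ∞)) '' S) ↔ ∀ i < k, i ∉ S := by
  simp only [le_sInf_iff, Set.forall_mem_image, Nat.cast_le]
  exact forall_congr' fun i ↦ not_imp_not.symm.trans (imp_congr_left not_le)

theorem natCast_le_gradeR_iff {E : ModuleCat.{u} R} {k : ℕ} :
    (k : ℕ∞) ≤ gradeR R E ↔ ∀ i < k, ExtVanishes R E R i := by
  simp only [gradeR, natCast_le_sInf_image, Set.mem_ofPred_eq, not_not]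
  exact forall₂_congr fun i _ ↦ subsingleton_extM_iff E (.of R R) i

theorem natCast_succ_le_rgrade_iff {C M : ModuleCat.{u} R} {k : ℕ} :
    ((k + 1 : ℕ) : ℕ∞) ≤ rgrade R C M ↔ ∀ i < k, ExtVanishes R M C (i + 1) := by
  simp only [rgrade, natCast_le_sInf_image, Set.mem_ofPred_eq, not_and, not_not,
    Nat.forall_lt_succ_left, lt_irrefl, false_imp_iff, true_and, Nat.succ_pos, true_imp_iff,
    subsingleton_extM_iff]

theorem one_le_rgrade {C M : ModuleCat.{u} R} : ((1 : ℕ) : ℕ∞) ≤ rgrade R C M :=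
  natCast_succ_le_rgrade_iff.mpr fun i hi ↦ (Nat.not_lt_zero i hi).elim

theorem gradeR_eq_top_of_subsingleton {E : ModuleCat.{u} R} (hE : Subsingleton E) :
    gradeR R E = ⊤ := by
  refine ENat.eq_top_iff_forall_ge.mpr fun k ↦ natCast_le_gradeR_iff.mpr fun i _ ↦ ?_
  cases i with
  | zero => exact extVanishes_zero_iff.mpr inferInstance
  | succ i => exact extVanishes_succ_of_projective i

theorem gcdimLE_of_gcdim_eq {C M : ModuleCat.{u} R} {n : ℕ} (h : gcdim R C M = n) :
    gcdimLE R C n M := by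
  have dims_nonempty : ((fun k : ℕ ↦ (k : ℕ∞)) '' {k | gcdimLE R C k M}).Nonempty := by
    rw [Set.nonempty_iff_ne_empty]
    intro dims_empty
    rw [gcdim, dims_empty, sInf_empty] at h
    exact ENat.top_ne_natCast n h
  obtain ⟨k, hk, k_eq⟩ := csInf_mem dims_nonempty
  obtain rfl : k = n := Nat.cast_injective (k_eq.trans h)
  exact hk

theorem IsLambda.exists_isMinimalPresentation {M L : ModuleCat.{u} R} (h : IsLambda R M L) :
    ∃ (P₁ P₀ : ModuleCat.{u} R) (d : P₁ →ₗ[R] P₀) (π : P₀ →ₗ[R] M), IsMinimalPresentation R d π ∧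
      ∀ i, ExtVanishes R L R (i + 1) ↔ ExtVanishes R (presentationLambda d) R (i + 1) := by
  obtain ⟨T, ⟨P₁, P₀, d, π, hd, ⟨eT⟩⟩, P, ρ, -, ⟨_, hρ, -⟩, ⟨eL⟩⟩ := h
  have := hd.finite_left
  have := hd.projective_left
  have : Module.Projective R (P₁ →ₗ[R] R) :=
    inferInstanceAs (Module.Projective R (Module.Dual R P₁))
  refine ⟨P₁, P₀, d, π, hd, fun i ↦ ?_⟩
  calc ExtVanishes R L R (i + 1)
      ↔ ExtVanishes R (LinearMap.ker ρ) R (i + 1) := extVanishes_iff_of_linearEquiv eL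
    _ ↔ ExtVanishes R T R (i + 2) :=
      (isShortExact_subtype_ker hρ).extVanishes_succ_iff_of_projective i
    _ ↔ ExtVanishes R ((P₁ →ₗ[R] R) ⧸ presentationLambda d) R (i + 2) :=
      extVanishes_iff_of_linearEquiv eT
    _ ↔ ExtVanishes R (presentationLambda d) R (i + 1) :=
      ((isShortExact_subtype_mkQ (presentationLambda d)).extVanishes_succ_iff_of_projective i).symm

theorem finite_extM [IsNoetherianRing R] (M N : ModuleCat.{u} R) [Module.Finite R M]
    [Module.Finite R N] (i : ℕ) : Module.Finite R (ExtM R M N i) :=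
  let ⟨e⟩ := nonempty_extM_linearEquiv_ext M N i
  .equiv e.symm

theorem gradeR_extM_eq_top {C M : ModuleCat.{u} R} {m i : ℕ} (hM : gcdimLE R C (m + 1) M)
    (hv : ∀ i < m, ExtVanishes R M C (i + 1)) (hi : 0 < i) (hne : i ≠ m + 1) :
    gradeR R (ExtM R M C i) = ⊤ := by
  refine gradeR_eq_top_of_subsingleton ((subsingleton_extM_iff M C i).mpr ?_)
  obtain hlt | hgt := hne.lt_or_gt
  · obtain ⟨j, rfl⟩ := Nat.exists_eq_add_one.mpr hi
    exact hv j (Nat.lt_of_succ_lt_succ hlt)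
  · exact hM.extVanishes hgt

theorem isBidualityObstruction_extM {C M : ModuleCat.{u} R} {m : ℕ} (hM : gcdimLE R C (m + 1) M)
    (hv : ∀ i < m, ExtVanishes R M C (i + 1)) :
    IsBidualityObstruction C M (ExtM R M C (m + 1)) (m + 1) :=
  let ⟨e⟩ := nonempty_extM_linearEquiv_ext M C (m + 1)
  isBidualityObstruction_of_gcdimLE hM hv e

namespace IsBidualityObstruction

variable [IsNoetherianRing R] {C M E : ModuleCat.{u} R} {n : ℕ}
  (hE : IsBidualityObstruction C M E (n + 1)) (hC : IsSemidualizing R C)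
include hE hC

variable {P₁ P₀ : ModuleCat.{u} R} {d : P₁ →ₗ[R] P₀} {π : P₀ →ₗ[R] M}

theorem extVanishes_iff_presentationLambda (hd : IsMinimalPresentation R d π)
    (hb : Function.Surjective (TensorProduct.mk R (presentationLambda d) C))
    (hT : ∀ k, Subsingleton (TorM R C (.of R (presentationLambda d)) (k + 1))) (i : ℕ) :
    ExtVanishes R E C (n + 1 + 1 + i) ↔ ExtVanishes R (presentationLambda d) R (i + 1) := by
  cases i with
  | zero =>
    exact hE.extVanishes_succ_iff_surjective.trans
      (hd.extVanishes_presentationLambda_one_iff hC hb hT).symm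
  | succ i =>
    rw [show n + 1 + 1 + (i + 1) = n + 1 + 2 + i by omega]
    exact (hE.extVanishes_add_two_iff i).trans
      (hd.extVanishes_presentationLambda_add_two_iff hC hb hT i).symm

variable [Module.Finite R E]

theorem natCast_le_gradeR_iff_extVanishes {k : ℕ} :
    (k : ℕ∞) ≤ gradeR R E ↔ ∀ i < k, ExtVanishes R E C i :=
  natCast_le_gradeR_iff.trans (hC.forall_extVanishes_iff_self k
    (extVanishes_zero_iff.mp (hE.extVanishes_of_lt 0 n.succ_pos))).symm

theorem succ_le_gradeR_iff_injective :
    ((n + 1 : ℕ) : ℕ∞) + 1 ≤ gradeR R E ↔ Function.Injective (bidualityMap R C M) := by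
  rw [← Nat.cast_succ, hE.natCast_le_gradeR_iff_extVanishes hC, Nat.forall_lt_succ_right,
    and_iff_right hE.extVanishes_of_lt, hE.extVanishes_iff_injective]

theorem add_rgrade_eq_gradeR {L : ModuleCat.{u} R}
    (hL : ∀ i, ExtVanishes R E C (n + 1 + 1 + i) ↔ ExtVanishes R L R (i + 1))
    (hgrade : ((n + 1 : ℕ) : ℕ∞) + 1 ≤ gradeR R E) :
    ((n + 1 : ℕ) : ℕ∞) + rgrade R (.of R R) L = gradeR R E := by
  refine ENat.eq_of_forall_natCast_le_iff fun k ↦ ?_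
  obtain hk | ⟨j, rfl⟩ : k ≤ n + 1 ∨ ∃ j, k = n + 1 + (j + 1) :=
    (le_or_gt k (n + 1)).imp_right Nat.exists_eq_add_of_lt
  · have natCast_le : (k : ℕ∞) ≤ (n + 1 : ℕ) := Nat.cast_le.mpr hk
    exact iff_of_true (natCast_le.trans le_self_add)
      (natCast_le.trans (le_self_add.trans hgrade))
  · rw [Nat.cast_add (n + 1), ENat.add_le_add_iff_left (ENat.natCast_ne_top _),
      natCast_succ_le_rgrade_iff, ← Nat.cast_add, hE.natCast_le_gradeR_iff_extVanishes hC]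
    rw [← Nat.cast_succ, hE.natCast_le_gradeR_iff_extVanishes hC] at hgrade
    refine ⟨fun hL_vanishes i hi ↦ ?_, fun hE_vanishes i hi ↦ (hL i).mp (hE_vanishes _ (by omega))⟩
    obtain hi' | ⟨t, rfl⟩ : i < n + 2 ∨ ∃ t, i = n + 2 + t :=
      (lt_or_ge i (n + 2)).imp_right Nat.exists_eq_add_of_le
    · exact hgrade i hi'
    · exact (hL t).mpr (hL_vanishes t (by omega))

theorem isHorizontallyLinked_iff (hR : IsSemiperfectRing R) (hM : IsStable R M)
    (hd : IsMinimalPresentation R d π)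
    (hb : Function.Surjective (TensorProduct.mk R (presentationLambda d) C)) :
    IsHorizontallyLinked R M ↔ ((n + 1 : ℕ) : ℕ∞) + 1 ≤ gradeR R E :=
  calc IsHorizontallyLinked R M
      ↔ Function.Injective (Module.Dual.eval R M) := hd.isHorizontallyLinked_iff hR hM
    _ ↔ Function.Injective (bidualityMap R C M) := (hd.bidualityMap_injective_iff hC hb).symm
    _ ↔ ((n + 1 : ℕ) : ℕ∞) + 1 ≤ gradeR R E := (hE.succ_le_gradeR_iff_injective hC).symm

theorem add_rgrade_eq_gradeR_of_isLambda
    (hA : ∀ L : ModuleCat.{u} R, IsLambda R M L → Function.Surjective (TensorProduct.mk R L C) ∧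
      ∀ i : ℕ, 0 < i → Subsingleton (TorM R C L i))
    (hgrade : ((n + 1 : ℕ) : ℕ∞) + 1 ≤ gradeR R E) {L : ModuleCat.{u} R} (hL : IsLambda R M L) :
    ((n + 1 : ℕ) : ℕ∞) + rgrade R (.of R R) L = gradeR R E := by
  obtain ⟨P₁, P₀, d, π, hd, hLd⟩ := hL.exists_isMinimalPresentation
  obtain ⟨hb, hT⟩ := hA _ hd.isLambda
  exact hE.add_rgrade_eq_gradeR hC (fun i ↦ (hE.extVanishes_iff_presentationLambda hC hd hb
    (fun k ↦ hT (k + 1) k.succ_pos) i).trans (hLd i).symm) hgrade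

end IsBidualityObstruction

end GradeOfExt

theorem statement18_general [IsNoetherianRing R] (hsp : IsSemiperfectRing R)
    (C : ModuleCat.{u} R) (hC : IsSemidualizing R C)
    (M : ModuleCat.{u} R) (hMfin : Module.Finite R M)
    (n : ℕ) (hstable : IsStable R M) (hrgrade : rgrade R C M = n) (hdim : gcdim R C M = n)
    (hA : ∀ L : ModuleCat.{u} R, IsLambda R M L → Function.Surjective (TensorProduct.mk R L C) ∧
      ∀ i : ℕ, 0 < i → Subsingleton (TorM R C L i)) :
    (IsHorizontallyLinked R M ↔
      ∀ L : ModuleCat.{u} R, IsLambda R M L →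
        rgrade R C M + rgrade R (ModuleCat.of R R) L =
          gradeR R (ExtM R M C n)) ∧
    (IsHorizontallyLinked R M ↔
      (n : ℕ∞) + 1 ≤ gradeR R (ExtM R M C n)) ∧
    (IsHorizontallyLinked R M ↔
      ∀ i : ℕ, 0 < i → (i : ℕ∞) + 1 ≤ gradeR R (ExtM R M C i)) := by
  obtain ⟨m, rfl⟩ := Nat.exists_eq_add_one.mpr (Nat.cast_le.mp (hrgrade ▸ one_le_rgrade))
  have hle := gcdimLE_of_gcdim_eq hdim
  have hv := natCast_succ_le_rgrade_iff.mp hrgrade.ge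
  have hE := isBidualityObstruction_extM hle hv
  have := hC.1
  have := finite_extM M C (m + 1)
  obtain ⟨P₀, π, _, hπ⟩ := hsp M hMfin
  obtain ⟨P₁, d, hd⟩ := exists_isMinimalPresentation hsp hπ
  have linked_iff := hE.isHorizontallyLinked_iff hC hsp hstable hd (hA _ hd.isLambda).1
  rw [hrgrade]
  refine ⟨⟨fun h L hL ↦ hE.add_rgrade_eq_gradeR_of_isLambda hC hA (linked_iff.mp h) hL,
    fun h ↦ linked_iff.mpr ?_⟩, linked_iff,
    linked_iff.trans ⟨fun h i hi ↦ ?_, fun h ↦ h (m + 1) m.succ_pos⟩⟩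
  · exact (add_le_add_right one_le_rgrade _).trans_eq (h _ hd.isLambda)
  · obtain rfl | hne := eq_or_ne i (m + 1)
    · exact h
    · exact (gradeR_extM_eq_top hle hv hi hne).symm ▸ le_top

/-- for `M` stable reduced `G_C`-perfect of `G_C`-dimension `n` with
`λM ∈ A_C`, the following are equivalent: (i) `M` horizontally linked;
(ii) `r.grade(M,C) + r.grade(λM) = grade(Ext_R^n(M,C))`;
(iii) `grade(Ext_R^n(M,C)) ≥ n+1`; (iv) `grade(Ext_R^i(M,C)) ≥ i+1` for all `i > 0`. -/
theorem statement18 [IsNoetherianRing R] (hsp : IsSemiperfectRing R)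
    (C : ModuleCat.{u} R) (hC : IsSemidualizing R C)
    (M : ModuleCat.{u} R) (hMfin : Module.Finite R ↥M)
    (n : ℕ) (hstable : IsStable R M)
    (hred : IsReducedGCPerfect R C M) (hdim : gcdim R C M = n)
    (hA : ∀ L : ModuleCat.{u} R, IsLambda R M L → MemAuslanderClass R C L) :
    (IsHorizontallyLinked R M ↔
      ∀ L : ModuleCat.{u} R, IsLambda R M L →
        rgrade R C M + rgrade R (ModuleCat.of R R) L =
          gradeR R (ExtM R M C n)) ∧
    (IsHorizontallyLinked R M ↔
      (n : ℕ∞) + 1 ≤ gradeR R (ExtM R M C n)) ∧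
    (IsHorizontallyLinked R M ↔
      ∀ i : ℕ, 0 < i → (i : ℕ∞) + 1 ≤ gradeR R (ExtM R M C i)) :=
  statement18_general R hsp C hC M hMfin n hstable (hred.2.trans hdim) hdim
    fun L hL ↦ ⟨(hA L hL).1.2, (hA L hL).2.1⟩

end
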